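/- arXiv:math/0101146 — 3 statements merged into one kernel-verified Lean document; each statement's English description precedes it below -/
import Mathlib

section
/- Let B be a unital complex algebra, (M, E : M → B) a B-probability space, D ⊆ B a unital subalgebra, and F : B → D a conditional expectation satisfying the faithfulness condition. Let N ⊆ M be a subalgebra containing D. Then N is free from B with amalgamation over D (with respect to F∘E) if and only if {n₁ b₁, n₂ b₂, …, n_{k−1} b_{k−1}, n_k}_E = F( {n₁ F(b₁), n₂ F(b₂), …, n_{k−1} F(b_{k−1}), n_k}_E ) for all k ≥ 1, all n₁, …, n_k ∈ N and all b₁, …, b_{k−1} ∈ B. -/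
open scoped Classical

noncomputable section

namespace OVFree

variable {B M : Type*}

/-- `P` is a set partition of `{1, …, n}` (modelled on `Fin n`): its blocks are
nonempty and every point lies in exactly one block. -/
def IsPartition {n : ℕ} (P : Finset (Finset (Fin n))) : Prop :=
  (∀ t ∈ P, t.Nonempty) ∧ ∀ i : Fin n, ∃! t, t ∈ P ∧ i ∈ t

/-- A set partition is non-crossing if there are no `a < b < c < d` with `a, c` in one
block and `b, d` in a different block. -/
def IsNonCrossing {n : ℕ} (P : Finset (Finset (Fin n))) : Prop :=
  ∀ a b c d : Fin n, a < b → b < c → c < d →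
    ∀ t ∈ P, ∀ u ∈ P, a ∈ t → c ∈ t → b ∈ u → d ∈ u → t = u

/-- `NC n`: the (finite) set of non-crossing partitions of `{1, …, n}`. -/
def NC (n : ℕ) : Finset (Finset (Finset (Fin n))) :=
  Finset.univ.filter fun P => IsPartition P ∧ IsNonCrossing P

/-- `i` is the least element of its block of `P`. -/
def IsBlockMin {n : ℕ} (P : Finset (Finset (Fin n))) (i : Fin n) : Prop :=
  ∀ t ∈ P, i ∈ t → ∀ j ∈ t, i ≤ j

/-- `i` is the greatest element of its block of `P`. -/
def IsBlockMax {n : ℕ} (P : Finset (Finset (Fin n))) (i : Fin n) : Prop :=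
  ∀ t ∈ P, i ∈ t → ∀ j ∈ t, j ≤ i

section Brack

variable [Ring B] [Algebra ℂ B] [Ring M] [Algebra ℂ M]

/-- A multiplicative map `⟨⋯⟩ : ⋃ₙ Mⁿ → B` (tuples are encoded as lists): a sequence of
`ℂ`-multilinear maps which is `B`-balanced in the sense of Speicher.  Here `ι : B →ₐ[ℂ] M`
is the inclusion of `B` as a unital subalgebra of `M`. -/
structure MultiplicativeMap (ι : B →ₐ[ℂ] M) where
  toFun : List M → B
  map_add : ∀ (pre : List M) (x y : M) (post : List M),
    toFun (pre ++ (x + y) :: post) = toFun (pre ++ x :: post) + toFun (pre ++ y :: post)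
  map_smul : ∀ (pre : List M) (c : ℂ) (x : M) (post : List M),
    toFun (pre ++ (c • x) :: post) = c • toFun (pre ++ x :: post)
  B_left : ∀ (b : B) (x : M) (post : List M),
    toFun ((ι b * x) :: post) = b * toFun (x :: post)
  B_right : ∀ (pre : List M) (x : M) (b : B),
    toFun (pre ++ [x * ι b]) = toFun (pre ++ [x]) * b
  B_mid : ∀ (pre : List M) (x : M) (b : B) (y : M) (post : List M),
    toFun (pre ++ (x * ι b) :: y :: post) = toFun (pre ++ x :: (ι b * y) :: post)

/-- Auxiliary operation: multiply the most recently collected argument of an open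
bracket (arguments are stored in reverse order) on the right by `ι b`. -/
def closeArg (ι : B →ₐ[ℂ] M) (b : B) : List M → List M
  | [] => []
  | a :: t => (a * ι b) :: t

/-- One step of the evaluation of the bracketing `π⟨m₁, …, mₙ⟩`.  The state consists of a
stack of argument lists (in reverse order) for the currently open brackets, together with
the product of the values of the already closed outermost brackets.  When `i` is the least
element of its block a new bracket is opened; `m i` is appended to the innermost open
bracket; when `i` is the greatest element of its block the innermost bracket `⟨…⟩` is
evaluated via `κ` and its value is multiplied into the preceding argument of the enclosing
bracket (per the insertion rule), resp. into the outer product (per the disjoint-union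
rule). -/
def bracketingStep (κ : List M → B) (ι : B →ₐ[ℂ] M) {n : ℕ} (P : Finset (Finset (Fin n)))
    (m : Fin n → M) (s : List (List M) × B) (i : Fin n) : List (List M) × B :=
  let st₁ : List (List M) := if IsBlockMin P i then [] :: s.1 else s.1
  let st₂ : List (List M) :=
    match st₁ with
    | [] => []
    | ts :: rest => (m i :: ts) :: rest
  if IsBlockMax P i then
    match st₂ with
    | [] => ([], s.2)
    | ts :: rest =>
        let b := κ ts.reverse
        match rest with
        | [] => ([], s.2 * b)
        | us :: rest' => (closeArg ι b us :: rest', s.2)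
  else (st₂, s.2)

/-- The bracketing `π⟨m₁, …, mₙ⟩ ∈ B` determined by a non-crossing partition `P` and a
multiplicative map `κ`: each block of `P` is interpreted as a bracket `⟨⋯⟩`, inner blocks
being inserted (as elements of `B`) after the preceding element of the enclosing block,
and the values of the outermost brackets being multiplied in order. -/
def bracketing (κ : List M → B) (ι : B →ₐ[ℂ] M) {n : ℕ} (P : Finset (Finset (Fin n)))
    (m : Fin n → M) : B :=
  ((List.finRange n).foldl (bracketingStep κ ι P m) ([], 1)).2

/-- `κ` is the `B`-valued cumulant map `{⋯}_E` of the `B`-probability space `(M, E)`: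
a multiplicative map satisfying the moment–cumulant formula
`E(m₁ ⋯ mₙ) = Σ_{π ∈ NC(n)} π{m₁, …, mₙ}_E`. -/
def IsCumulantMap (ι : B →ₐ[ℂ] M) (E : M →ₗ[ℂ] B) (κ : MultiplicativeMap ι) : Prop :=
  ∀ (n : ℕ) (m : Fin n → M), 0 < n →
    E (((List.finRange n).map m).prod) = ∑ P ∈ NC n, bracketing κ.toFun ι P m

/-- The cumulant series `k_{i₁,…,i_{k+1}}(b₁, …, b_k) = {X_{i₁} b₁, …, X_{i_k} b_k, X_{i_{k+1}}}`
of a family `X₁, …, X_N` with respect to a multiplicative map `κ`. -/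
def cumulantSeries {ι : B →ₐ[ℂ] M} (κ : MultiplicativeMap ι) {N : ℕ} (X : Fin N → M)
    {k : ℕ} (i : Fin (k + 1) → Fin N) (b : Fin k → B) : B :=
  κ.toFun (((List.finRange k).map fun j => X (i j.castSucc) * ι (b j)) ++ [X (i (Fin.last k))])

/-- `E : M → B` is a conditional expectation onto the unital subalgebra `ι(B) ⊆ M`. -/
def IsCondExp (ι : B →ₐ[ℂ] M) (E : M →ₗ[ℂ] B) : Prop :=
  E 1 = 1 ∧ ∀ (b b' : B) (m : M), E (ι b * m * ι b') = b * E m * b'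

/-- The subalgebras `A₁, A₂ ⊆ M` are free with amalgamation (with respect to the
`D`-valued expectation `G`, `D` being a common subalgebra of `A₁` and `A₂`): any
alternating product of `G`-centered elements of `A₁` and `A₂` is `G`-centered. -/
def FreeWithAmalgamation (G : M → B) (A₁ A₂ : Subalgebra ℂ M) : Prop :=
  ∀ l : List (M × Bool), l ≠ [] →
    List.Chain' (fun p q : M × Bool => p.2 ≠ q.2) l →
    (∀ p ∈ l, p.1 ∈ (if p.2 then A₁ else A₂) ∧ G p.1 = 0) →
    G (l.map Prod.fst).prod = 0

end Brack

end OVFree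

open OVFree

namespace OVFree

section Comb

/-- The stack of openers of a word of opening / closing flags. -/
def ostk (o c : ℕ → Bool) : ℕ → List ℕ
  | 0 => []
  | i + 1 =>
    let s := if o i then i :: ostk o c i else ostk o c i
    if c i then s.tail else s

/-- The stack in the middle of step `i`. -/
def omid (o c : ℕ → Bool) (i : ℕ) : List ℕ :=
  if o i then i :: ostk o c i else ostk o c i

lemma ostk_succ (o c : ℕ → Bool) (i : ℕ) :
    ostk o c (i + 1) = if c i then (omid o c i).tail else omid o c i := rfl

lemma ostk_sub (o c : ℕ → Bool) (i x : ℕ) (h : x ∈ ostk o c (i + 1)) : x ∈ omid o c i := by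
  rw [ostk_succ] at h
  split_ifs at h
  · exact List.mem_of_mem_tail h
  · exact h

lemma ostk_lt (o c : ℕ → Bool) : ∀ i, ∀ x ∈ ostk o c i, x < i := by
  intro i
  induction i with
  | zero => intro x hx; simp [ostk] at hx
  | succ i ih =>
    intro x hx
    have h := ostk_sub o c i x hx
    unfold omid at h
    split_ifs at h
    · rcases List.mem_cons.1 h with h | h
      · omega
      · have := ih x h; omega
    · have := ih x h; omega

lemma omid_le (o c : ℕ → Bool) (i x : ℕ) (h : x ∈ omid o c i) : x ≤ i := by
  unfold omid at h
  split_ifs at h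
  · rcases List.mem_cons.1 h with h | h
    · omega
    · have := ostk_lt o c i x h; omega
  · have := ostk_lt o c i x h; omega

lemma ostk_sorted (o c : ℕ → Bool) : ∀ i, (ostk o c i).Pairwise (· > ·) := by
  intro i
  induction i with
  | zero => simp [ostk]
  | succ i ih =>
    have h : (omid o c i).Pairwise (· > ·) := by
      unfold omid
      split_ifs
      · exact List.pairwise_cons.2 ⟨fun x hx => ostk_lt o c i x hx, ih⟩
      · exact ih
    rw [ostk_succ]
    split_ifs
    · exact h.tail
    · exact h

lemma omid_sorted (o c : ℕ → Bool) (i : ℕ) : (omid o c i).Pairwise (· > ·) := by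
  unfold omid
  split_ifs
  · exact List.pairwise_cons.2 ⟨fun x hx => ostk_lt o c i x hx, ostk_sorted o c i⟩
  · exact ostk_sorted o c i

lemma omid_mem_of_le (o c : ℕ → Bool) (x i j : ℕ) (hij : i ≤ j) (hx : x ∈ omid o c j)
    (hxi : x ≤ i) : x ∈ omid o c i := by
  induction j, hij using Nat.le_induction with
  | base => exact hx
  | succ j hj ih =>
    apply ih
    unfold omid at hx
    split_ifs at hx
    · rcases List.mem_cons.1 hx with h | h
      · omega
      · exact ostk_sub _ _ _ _ h
    · exact ostk_sub _ _ _ _ hx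

/-- The opener of the block of `i`. -/
def opn (o c : ℕ → Bool) (i : ℕ) : ℕ := (omid o c i).headD 0

/-- Validity of a word of length `n`. -/
def OValid (o c : ℕ → Bool) (n : ℕ) : Prop :=
  (∀ i < n, omid o c i ≠ []) ∧ ostk o c n = []

lemma opn_mem {o c : ℕ → Bool} {i : ℕ} (h : omid o c i ≠ []) : opn o c i ∈ omid o c i := by
  unfold opn
  cases hh : omid o c i with
  | nil => exact absurd hh h
  | cons a t => simp

lemma le_opn {o c : ℕ → Bool} {i x : ℕ} (h : x ∈ omid o c i) : x ≤ opn o c i := by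
  have hs := omid_sorted o c i
  unfold opn
  cases hh : omid o c i with
  | nil => rw [hh] at h; simp at h
  | cons a t =>
    rw [hh] at h hs
    rcases List.mem_cons.1 h with h | h
    · simp [h]
    · exact ((List.pairwise_cons.1 hs).1 x h).le

lemma opn_eq {o c : ℕ → Bool} {i a : ℕ} (h : a ∈ omid o c i) (h2 : ∀ x ∈ omid o c i, x ≤ a) :
    opn o c i = a :=
  le_antisymm (h2 _ (opn_mem (List.ne_nil_of_mem h))) (le_opn h)

lemma opn_le {o c : ℕ → Bool} {i : ℕ} (h : omid o c i ≠ []) : opn o c i ≤ i :=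
  omid_le _ _ _ _ (opn_mem h)

lemma mem_tail_iff {o c : ℕ → Bool} {i x : ℕ} :
    x ∈ (omid o c i).tail ↔ x ∈ omid o c i ∧ x ≠ opn o c i := by
  have hs := omid_sorted o c i
  unfold opn
  cases hh : omid o c i with
  | nil => simp
  | cons a t =>
    rw [hh] at hs
    have h1 := (List.pairwise_cons.1 hs).1
    simp only [List.tail_cons, List.mem_cons, List.headD_cons]
    constructor
    · intro hx; exact ⟨Or.inr hx, (h1 x hx).ne⟩
    · rintro ⟨h | h, h'⟩
      · exact absurd h h'
      · exact h

lemma opn_self_iff {o c : ℕ → Bool} {i : ℕ} (h : omid o c i ≠ []) :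
    opn o c i = i ↔ o i = true := by
  constructor
  · intro h1
    by_contra h2
    have h3 := opn_mem h
    unfold omid at h3
    rw [if_neg h2, h1] at h3
    exact lt_irrefl _ (ostk_lt _ _ _ _ h3)
  · intro h1
    simp [opn, omid, h1]

lemma opn_opn {o c : ℕ → Bool} {i : ℕ} (h : omid o c i ≠ []) :
    omid o c (opn o c i) ≠ [] ∧ opn o c (opn o c i) = opn o c i := by
  have h1 := omid_mem_of_le o c (opn o c i) (opn o c i) i (opn_le h) (opn_mem h) le_rfl
  exact ⟨List.ne_nil_of_mem h1, opn_eq h1 fun x hx => omid_le _ _ _ _ hx⟩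

lemma exists_later (o c : ℕ → Bool) (n x : ℕ) (hn : ostk o c n = []) :
    ∀ d k, k + d = n → x ∈ ostk o c k → ∃ j, k ≤ j ∧ j < n ∧ opn o c j = x := by
  intro d
  induction d with
  | zero => intro k hk hx; simp at hk; subst hk; rw [hn] at hx; simp at hx
  | succ d ih =>
    intro k hk hx
    by_cases hxo : opn o c k = x
    · exact ⟨k, le_rfl, by omega, hxo⟩
    · have hm : x ∈ omid o c k := by
        unfold omid; split_ifs
        · exact List.mem_cons_of_mem _ hx
        · exact hx
      have : x ∈ ostk o c (k + 1) := by
        rw [ostk_succ]; split_ifs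
        · exact mem_tail_iff.2 ⟨hm, fun h => hxo h.symm⟩
        · exact hm
      obtain ⟨j, h1, h2, h3⟩ := ih (k + 1) (by omega) this
      exact ⟨j, by omega, h2, h3⟩

lemma close_iff {o c : ℕ → Bool} {n i : ℕ} (hv : OValid o c n) (hi : i < n) :
    c i = true ↔ ∀ j < n, opn o c j = opn o c i → j ≤ i := by
  constructor
  · intro hc j hj hji
    by_contra hlt
    have h1 : opn o c i ∈ omid o c j := hji ▸ opn_mem (hv.1 j hj)
    have h2 := opn_le (hv.1 i hi)
    have h3 := omid_mem_of_le o c _ (i + 1) j (by omega) h1 (by omega)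
    have h4 : opn o c i ∈ ostk o c (i + 1) := by
      unfold omid at h3
      split_ifs at h3
      · rcases List.mem_cons.1 h3 with h | h
        · omega
        · exact h
      · exact h3
    rw [ostk_succ, if_pos hc, mem_tail_iff] at h4
    exact h4.2 rfl
  · intro h
    by_contra hc
    have h1 : opn o c i ∈ ostk o c (i + 1) := by
      rw [ostk_succ, if_neg hc]; exact opn_mem (hv.1 i hi)
    obtain ⟨j, h2, h3, h4⟩ := exists_later o c n _ hv.2 (n - (i + 1)) (i + 1) (by omega) h1
    have := h j h3 h4
    omega

lemma opn_noncross {o c : ℕ → Bool} {n a b d e : ℕ} (hv : OValid o c n) (hab : a < b)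
    (hbd : b < d) (hde : d < e) (he : e < n) (h1 : opn o c a = opn o c d)
    (h2 : opn o c b = opn o c e) : opn o c a = opn o c b := by
  have ha := opn_le (hv.1 a (by omega))
  have hb := opn_le (hv.1 b (by omega))
  apply le_antisymm
  · apply le_opn
    apply omid_mem_of_le o c _ b d (by omega) _ (by omega)
    rw [h1]; exact opn_mem (hv.1 d (by omega))
  · rw [h1]; apply le_opn
    apply omid_mem_of_le o c _ d e (by omega) _ (by omega)
    rw [h2]; exact opn_mem (hv.1 e (by omega))

/-- Fibres of a labelling. -/
def fibP {n : ℕ} (q : ℕ → ℕ) : Finset (Finset (Fin n)) :=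
  Finset.univ.image fun i : Fin n => Finset.univ.filter fun j : Fin n => q j = q i

lemma mem_fibP {n : ℕ} (q : ℕ → ℕ) (t : Finset (Fin n)) (ht : t ∈ fibP (n := n) q) (i : Fin n)
    (hi : i ∈ t) (j : Fin n) : j ∈ t ↔ q j = q i := by
  unfold fibP at ht
  obtain ⟨k, -, rfl⟩ := Finset.mem_image.1 ht
  simp at hi ⊢
  rw [hi]

lemma fib_mem {n : ℕ} (q : ℕ → ℕ) (i : Fin n) :
    (Finset.univ.filter fun j : Fin n => q j = q i) ∈ fibP (n := n) q :=
  Finset.mem_image.2 ⟨i, Finset.mem_univ _, rfl⟩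

lemma fibP_partition {n : ℕ} (q : ℕ → ℕ) : IsPartition (fibP (n := n) q) := by
  constructor
  · intro t ht
    obtain ⟨k, -, rfl⟩ := Finset.mem_image.1 ht
    exact ⟨k, by simp⟩
  · intro i
    refine ⟨_, ⟨fib_mem q i, by simp⟩, ?_⟩
    rintro t ⟨ht, hi⟩
    ext j
    rw [mem_fibP q t ht i hi]; simp

lemma fibP_blockMin {n : ℕ} (q : ℕ → ℕ) (i : Fin n) :
    IsBlockMin (fibP (n := n) q) i ↔ ∀ j : Fin n, q j = q i → i ≤ j := by
  constructor
  · intro h j hj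
    exact h _ (fib_mem q i) (by simp) j (by simpa using hj)
  · intro h t ht hi j hj
    exact h j ((mem_fibP q t ht i hi j).1 hj)

lemma fibP_blockMax {n : ℕ} (q : ℕ → ℕ) (i : Fin n) :
    IsBlockMax (fibP (n := n) q) i ↔ ∀ j : Fin n, q j = q i → j ≤ i := by
  constructor
  · intro h j hj
    exact h _ (fib_mem q i) (by simp) j (by simpa using hj)
  · intro h t ht hi j hj
    exact h j ((mem_fibP q t ht i hi j).1 hj)

/-- extend a word on `Fin n` to `ℕ` -/
def ext1 {n : ℕ} (w : Fin n → Bool × Bool) (i : ℕ) : Bool :=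
  if h : i < n then (w ⟨i, h⟩).1 else false
/-- extend a word on `Fin n` to `ℕ` -/
def ext2 {n : ℕ} (w : Fin n → Bool × Bool) (i : ℕ) : Bool :=
  if h : i < n then (w ⟨i, h⟩).2 else false

/-- valid words -/
def WValid {n : ℕ} (w : Fin n → Bool × Bool) : Prop := OValid (ext1 w) (ext2 w) n

/-- the partition of a word -/
def wordP {n : ℕ} (w : Fin n → Bool × Bool) : Finset (Finset (Fin n)) :=
  fibP (opn (ext1 w) (ext2 w))

/-- the word of a partition -/
def flags {n : ℕ} (P : Finset (Finset (Fin n))) : Fin n → Bool × Bool :=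
  fun i => (decide (IsBlockMin P i), decide (IsBlockMax P i))

lemma wordP_mem {n : ℕ} (w : Fin n → Bool × Bool) (hw : WValid w) : wordP w ∈ NC n := by
  unfold NC
  refine Finset.mem_filter.2 ⟨Finset.mem_univ _, fibP_partition _, ?_⟩
  intro a b c d hab hbc hcd t ht u hu ha hc hb hd
  have h1 := (mem_fibP _ t ht c hc a).1 ha
  have h2 := (mem_fibP _ u hu d hd b).1 hb
  have h3 := opn_noncross hw (a := a) (b := b) (d := c) (e := d) hab hbc hcd d.2 h1 h2
  exact (fibP_partition (opn (ext1 w) (ext2 w))).2 b |>.unique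
    ⟨ht, (mem_fibP _ t ht a ha b).2 h3.symm⟩ ⟨hu, hb⟩

lemma flags_wordP {n : ℕ} (w : Fin n → Bool × Bool) (hw : WValid w) : flags (wordP w) = w := by
  funext i
  have hi := hw.1 i i.2
  apply Prod.ext
  · show decide (IsBlockMin (wordP w) i) = (w i).1
    have h1 : (w i).1 = ext1 w i := by simp [ext1]
    rw [h1, Bool.eq_iff_iff, decide_eq_true_iff, ← opn_self_iff hi, wordP, fibP_blockMin]
    constructor
    · intro h
      have h2 := opn_opn hi
      have h3 := opn_le hi
      have := h ⟨opn (ext1 w) (ext2 w) i, by omega⟩ h2.2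
      have h4 : (i : ℕ) ≤ opn (ext1 w) (ext2 w) i := this
      omega
    · intro h j hj
      rw [h] at hj
      have := opn_le (hw.1 j j.2)
      show (i : ℕ) ≤ j
      omega
  · show decide (IsBlockMax (wordP w) i) = (w i).2
    have h1 : (w i).2 = ext2 w i := by simp [ext2]
    rw [h1, Bool.eq_iff_iff, decide_eq_true_iff, close_iff hw i.2, wordP, fibP_blockMax]
    constructor
    · intro h j hj hji
      exact h ⟨j, hj⟩ hji
    · intro h j hj
      exact h j j.2 hj

/-- The main invariant of the opener stack of a non-crossing partition. -/
lemma flags_inv {n : ℕ} (P : Finset (Finset (Fin n))) (hP : IsPartition P)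
    (hN : IsNonCrossing P) (i : Fin n) (ti : Finset (Fin n)) (hti : ti ∈ P) (hi : i ∈ ti)
    (a : Fin n) (ha : a ∈ ti) (hmin : ∀ j ∈ ti, a ≤ j)
    (hinv : ∀ x, x ∈ ostk (ext1 (flags P)) (ext2 (flags P)) i ↔
      ∃ t ∈ P, (∃ a ∈ t, a.val = x ∧ ∀ j ∈ t, a ≤ j) ∧ x < i ∧ ∃ j ∈ t, i.val ≤ j.val) :
    opn (ext1 (flags P)) (ext2 (flags P)) i = a ∧
    ∀ x, x ∈ omid (ext1 (flags P)) (ext2 (flags P)) i ↔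
      ∃ t ∈ P, (∃ a ∈ t, a.val = x ∧ ∀ j ∈ t, a ≤ j) ∧ x ≤ i ∧ ∃ j ∈ t, i.val ≤ j.val := by
  have huniq : ∀ t ∈ P, ∀ u ∈ P, ∀ k, k ∈ t → k ∈ u → t = u := fun t ht u hu k h1 h2 =>
    (hP.2 k).unique ⟨ht, h1⟩ ⟨hu, h2⟩
  have ho : ext1 (flags P) i = true ↔ IsBlockMin P i := by simp [ext1, flags]
  have hmem : ∀ x, x ∈ omid (ext1 (flags P)) (ext2 (flags P)) i ↔
      ∃ t ∈ P, (∃ a ∈ t, a.val = x ∧ ∀ j ∈ t, a ≤ j) ∧ x ≤ i ∧ ∃ j ∈ t, i.val ≤ j.val := by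
    intro x
    unfold omid
    by_cases hb : IsBlockMin P i
    · rw [if_pos (ho.2 hb), List.mem_cons, hinv]
      constructor
      · rintro (h | ⟨t, h1, h2, h3, h4⟩)
        · exact ⟨ti, hti, ⟨i, hi, h.symm, hb ti hti hi⟩, h.le, i, hi, le_rfl⟩
        · exact ⟨t, h1, h2, h3.le, h4⟩
      · rintro ⟨t, h1, h2, h3, h4⟩
        rcases h3.eq_or_lt with h | h
        · exact Or.inl h
        · exact Or.inr ⟨t, h1, h2, h, h4⟩
    · rw [if_neg (fun h => hb (ho.1 h)), hinv]
      constructor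
      · rintro ⟨t, h1, h2, h3, h4⟩
        exact ⟨t, h1, h2, h3.le, h4⟩
      · rintro ⟨t, h1, ⟨b, hbt, hbx, hbm⟩, h3, h4⟩
        refine ⟨t, h1, ⟨b, hbt, hbx, hbm⟩, lt_of_le_of_ne h3 ?_, h4⟩
        intro hxi
        apply hb
        have : b = i := Fin.ext (hbx.trans hxi)
        subst this
        intro u hu hbu
        rw [huniq u hu t h1 b hbu hbt]; exact hbm
  refine ⟨?_, hmem⟩
  apply opn_eq
  · exact (hmem _).2 ⟨ti, hti, ⟨a, ha, rfl, hmin⟩, hmin i hi, i, hi, le_rfl⟩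
  · intro x hx
    obtain ⟨t, h1, ⟨b, hbt, hbx, hbm⟩, h3, j, hj, hij⟩ := (hmem x).1 hx
    by_contra hlt
    have hab : a < b := by show a.val < b.val; omega
    have hne : t ≠ ti := by
      rintro rfl
      have := hbm a ha
      exact absurd hab (not_lt.2 this)
    have hbi : b < i := by
      refine lt_of_le_of_ne (by show b.val ≤ i.val; omega) ?_
      rintro rfl
      exact hne (huniq t h1 ti hti b hbt hi)
    have hij' : i < j := by
      refine lt_of_le_of_ne (by show i.val ≤ j.val; omega) ?_
      rintro rfl
      exact hne (huniq t h1 ti hti i hj hi)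
    exact hne (hN a b i j hab hbi hij' ti hti t h1 ha hi hbt hj).symm

lemma exists_min {n : ℕ} (P : Finset (Finset (Fin n))) (hP : IsPartition P) (i : Fin n) :
    ∃ t ∈ P, i ∈ t ∧ ∃ a ∈ t, ∀ j ∈ t, a ≤ j := by
  obtain ⟨t, ⟨ht, hi⟩, -⟩ := hP.2 i
  exact ⟨t, ht, hi, t.min' ⟨i, hi⟩, Finset.min'_mem _ _, fun j hj => Finset.min'_le _ _ hj⟩

lemma flags_inv_all {n : ℕ} (P : Finset (Finset (Fin n))) (hP : IsPartition P)
    (hN : IsNonCrossing P) : ∀ i ≤ n, ∀ x,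
      x ∈ ostk (ext1 (flags P)) (ext2 (flags P)) i ↔
      ∃ t ∈ P, (∃ a ∈ t, a.val = x ∧ ∀ j ∈ t, a ≤ j) ∧ x < i ∧ ∃ j ∈ t, i ≤ j.val := by
  have huniq : ∀ t ∈ P, ∀ u ∈ P, ∀ k, k ∈ t → k ∈ u → t = u := fun t ht u hu k h1 h2 =>
    (hP.2 k).unique ⟨ht, h1⟩ ⟨hu, h2⟩
  intro i
  induction i with
  | zero => intro _ x; simp [ostk]
  | succ i ih =>
    intro hi x
    obtain ⟨ti, hti, hit, a, ha, hmin⟩ := exists_min P hP ⟨i, hi⟩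
    obtain ⟨h1, h2⟩ := flags_inv P hP hN ⟨i, hi⟩ ti hti hit a ha hmin (ih (by omega))
    simp only at h1 h2
    have hc : ext2 (flags P) i = true ↔ IsBlockMax P ⟨i, hi⟩ := by
      simp [ext2, flags, Nat.lt_of_succ_le hi]
    rw [ostk_succ]
    by_cases hb : IsBlockMax P ⟨i, hi⟩
    · rw [if_pos (hc.2 hb), mem_tail_iff, h2, h1]
      constructor
      · rintro ⟨⟨t, h3, ⟨b, hbt, hbx, hbm⟩, h5, j, hj, hij⟩, hne⟩
        refine ⟨t, h3, ⟨b, hbt, hbx, hbm⟩, by omega, j, hj, ?_⟩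
        rcases hij.eq_or_lt with h | h
        · exfalso
          have : j = ⟨i, hi⟩ := Fin.ext h.symm
          subst this
          have := huniq t h3 ti hti _ hj hit
          subst this
          have h6 := hbm a ha
          have h7 := hmin b hbt
          exact hne (hbx ▸ congrArg Fin.val (le_antisymm h6 h7))
        · exact h
      · rintro ⟨t, h3, ⟨b, hbt, hbx, hbm⟩, h5, j, hj, hij⟩
        refine ⟨⟨t, h3, ⟨b, hbt, hbx, hbm⟩, by omega, j, hj, by omega⟩, ?_⟩
        intro hxa
        have : b = a := Fin.ext (hbx.trans hxa)
        subst this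
        have := huniq t h3 ti hti _ hbt ha
        subst this
        have h6 : j.val ≤ i := hb t h3 hit j hj
        omega
    · rw [if_neg (fun h => hb (hc.1 h)), h2]
      constructor
      · rintro ⟨t, h3, h4, h5, j, hj, hij⟩
        refine ⟨t, h3, h4, by omega, ?_⟩
        rcases hij.eq_or_lt with h | h
        · have : j = ⟨i, hi⟩ := Fin.ext h.symm
          subst this
          have := huniq t h3 ti hti _ hj hit
          subst this
          by_contra hcon
          apply hb
          intro u hu hiu k hk
          have := huniq u hu t h3 _ hiu hit
          subst this
          by_contra hlt
          exact hcon ⟨k, hk, by have : i < k.val := not_le.1 hlt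
                                omega⟩
        · exact ⟨j, hj, h⟩
      · rintro ⟨t, h3, h4, h5, j, hj, hij⟩
        exact ⟨t, h3, h4, by omega, j, hj, by omega⟩

lemma flags_opn {n : ℕ} (P : Finset (Finset (Fin n))) (hP : IsPartition P)
    (hN : IsNonCrossing P) (i : Fin n) (t : Finset (Fin n)) (ht : t ∈ P) (hi : i ∈ t)
    (a : Fin n) (ha : a ∈ t) (hmin : ∀ j ∈ t, a ≤ j) :
    opn (ext1 (flags P)) (ext2 (flags P)) i = a ∧
      omid (ext1 (flags P)) (ext2 (flags P)) i ≠ [] := by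
  obtain ⟨h1, h2⟩ := flags_inv P hP hN i t ht hi a ha hmin
    (flags_inv_all P hP hN i (by omega))
  exact ⟨h1, List.ne_nil_of_mem ((h2 _).2 ⟨t, ht, ⟨a, ha, rfl, hmin⟩, hmin i hi, i, hi, le_rfl⟩)⟩

lemma flags_valid {n : ℕ} (P : Finset (Finset (Fin n))) (hP : P ∈ NC n) : WValid (flags P) := by
  obtain ⟨-, hP, hN⟩ := Finset.mem_filter.1 hP
  constructor
  · intro i hi
    obtain ⟨t, ht, hit, a, ha, hmin⟩ := exists_min P hP ⟨i, hi⟩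
    exact (flags_opn P hP hN ⟨i, hi⟩ t ht hit a ha hmin).2
  · rw [List.eq_nil_iff_forall_not_mem]
    intro x hx
    obtain ⟨t, -, -, -, j, -, hj⟩ := (flags_inv_all P hP hN n le_rfl x).1 hx
    omega

lemma wordP_flags {n : ℕ} (P : Finset (Finset (Fin n))) (hP : P ∈ NC n) :
    wordP (flags P) = P := by
  obtain ⟨-, hP, hN⟩ := Finset.mem_filter.1 hP
  have huniq : ∀ t ∈ P, ∀ u ∈ P, ∀ k, k ∈ t → k ∈ u → t = u := fun t ht u hu k h1 h2 =>
    (hP.2 k).unique ⟨ht, h1⟩ ⟨hu, h2⟩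
  have key : ∀ t ∈ P, ∀ i ∈ t, (Finset.univ.filter fun j : Fin n =>
      opn (ext1 (flags P)) (ext2 (flags P)) j = opn (ext1 (flags P)) (ext2 (flags P)) i) = t := by
    intro t ht i hit
    obtain ⟨t', ht', hit', a, ha, hmin⟩ := exists_min P hP i
    have := huniq t' ht' t ht i hit' hit
    subst this
    have h1 := (flags_opn P hP hN i t' ht hit a ha hmin).1
    ext j
    simp only [Finset.mem_filter, Finset.mem_univ, true_and]
    rw [h1]
    constructor
    · intro hj
      obtain ⟨u, hu, hju, b, hb, hbmin⟩ := exists_min P hP j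
      have h2 := (flags_opn P hP hN j u hu hju b hb hbmin).1
      have : b = a := Fin.ext (h2.symm.trans hj)
      subst this
      rw [huniq t' ht u hu b ha hb]; exact hju
    · intro hj
      exact (flags_opn P hP hN j t' ht hj a ha hmin).1
  ext t
  unfold wordP fibP
  rw [Finset.mem_image]
  constructor
  · rintro ⟨i, -, rfl⟩
    obtain ⟨t', ht', hit', -⟩ := exists_min P hP i
    rw [key t' ht' i hit']; exact ht'
  · intro ht
    obtain ⟨i, hi⟩ := hP.1 t ht
    exact ⟨i, Finset.mem_univ _, key t ht i hi⟩

lemma sum_NC_eq {B : Type*} [AddCommMonoid B] {n : ℕ} (G : (Fin n → Bool × Bool) → B) :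
    ∑ P ∈ NC n, G (flags P) = ∑ w : Fin n → Bool × Bool, if WValid w then G w else 0 := by
  rw [← Finset.sum_filter]
  refine Finset.sum_bij' (fun P _ => flags P) (fun w _ => wordP w) ?_ ?_ ?_ ?_ ?_
  · intro P hP; simp [flags_valid P hP]
  · intro w hw; exact wordP_mem w (by simpa using hw)
  · intro P hP; exact wordP_flags P hP
  · intro w hw; exact flags_wordP w (by simpa using hw)
  · intro P hP; rfl

end Comb

section Machine

/-- depth validity of a word -/
def dval : ℕ → List (Bool × Bool) → Prop
  | d, [] => d = 0
  | d, p :: w => 1 ≤ d + p.1.toNat ∧ dval (d + p.1.toNat - p.2.toNat) w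

lemma omid_length (o c : ℕ → Bool) (i : ℕ) :
    (omid o c i).length = (ostk o c i).length + (o i).toNat := by
  unfold omid; cases o i <;> simp

lemma ostk_length (o c : ℕ → Bool) (i : ℕ) :
    (ostk o c (i + 1)).length = (ostk o c i).length + (o i).toNat - (c i).toNat := by
  rw [ostk_succ, ← omid_length o c]; cases c i <;> simp

lemma dval_iff (o c : ℕ → Bool) : ∀ (L : List (Bool × Bool)) (k : ℕ),
    (∀ i (h : i < L.length), L[i] = (o (k + i), c (k + i))) →
    (dval (ostk o c k).length L ↔
      (∀ i < L.length, omid o c (k + i) ≠ []) ∧ ostk o c (k + L.length) = []) := by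
  intro L
  induction L with
  | nil => intro k _; simp [dval]
  | cons p L ih =>
    intro k h
    have h0 := h 0 (by simp)
    simp at h0
    have ih' := ih (k + 1) (by
      intro i hi
      have := h (i + 1) (by simpa using hi)
      simp only [List.getElem_cons_succ] at this
      rw [this]; congr 2 <;> ring)
    rw [ostk_length] at ih'
    subst h0
    simp only [dval]
    rw [ih', ← omid_length, Nat.one_le_iff_ne_zero, Ne, List.length_eq_zero_iff]
    have e : k + 1 + L.length = k + ((o k, c k) :: L).length := by simp; ring
    rw [e, ← and_assoc]
    refine and_congr_left fun _ => ?_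
    constructor
    · rintro ⟨h1, h2⟩ i hi
      cases i with
      | zero => exact h1
      | succ i =>
        have := h2 i (by simpa using hi)
        rwa [show k + (i + 1) = k + 1 + i by ring]
    · intro h1
      refine ⟨h1 0 (by simp), fun i hi => ?_⟩
      have := h1 (i + 1) (by simpa using hi)
      rwa [show k + 1 + i = k + (i + 1) by ring]

lemma WValid_iff {n : ℕ} (w : Fin n → Bool × Bool) : WValid w ↔ dval 0 (List.ofFn w) := by
  have := dval_iff (ext1 w) (ext2 w) (List.ofFn w) 0 (by
    intro i hi
    have hi' : i < n := by simpa using hi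
    simp [ext1, ext2, hi'])
  simp only [ostk, List.length_nil] at this
  rw [this]; unfold WValid OValid; simp

variable {B M : Type*} [Ring B] [Algebra ℂ B] [Ring M] [Algebra ℂ M]

/-- closing the bracket `ts` above `rest` -/
def clZ (κ : List M → B) (ι : B →ₐ[ℂ] M) (ts : List M) (rest : List (List M)) (acc : B) :
    List (List M) × B :=
  match rest with
  | [] => ([], acc * κ ts.reverse)
  | us :: r => (closeArg ι (κ ts.reverse) us :: r, acc)

/-- word version of `bracketingStep` -/
def stepW (κ : List M → B) (ι : B →ₐ[ℂ] M) (s : List (List M) × B) (p : (Bool × Bool) × M) :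
    List (List M) × B :=
  let st₁ : List (List M) := if p.1.1 then [] :: s.1 else s.1
  match st₁ with
  | [] => ([], s.2)
  | ts :: rest => if p.1.2 then clZ κ ι (p.2 :: ts) rest s.2 else ((p.2 :: ts) :: rest, s.2)

lemma bracketingStep_eq (κ : List M → B) (ι : B →ₐ[ℂ] M) {n : ℕ} (P : Finset (Finset (Fin n)))
    (m : Fin n → M) (s : List (List M) × B) (i : Fin n) :
    bracketingStep κ ι P m s i = stepW κ ι s (flags P i, m i) := by
  obtain ⟨st, acc⟩ := s
  unfold bracketingStep stepW flags
  by_cases h1 : IsBlockMin P i <;> by_cases h2 : IsBlockMax P i <;>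
    rcases st with _ | ⟨us, _ | ⟨vs, r⟩⟩ <;> simp [h1, h2, clZ]

lemma bracketing_eq (κ : List M → B) (ι : B →ₐ[ℂ] M) {n : ℕ} (P : Finset (Finset (Fin n)))
    (m : Fin n → M) :
    bracketing κ ι P m =
      ((List.ofFn fun i => (flags P i, m i)).foldl (stepW κ ι) ([], 1)).2 := by
  unfold bracketing
  have : bracketingStep κ ι P m = fun s i => stepW κ ι s (flags P i, m i) := by
    funext s i; exact bracketingStep_eq κ ι P m s i
  rw [this, List.ofFn_eq_map, List.foldl_map]

/-- The sum over all valid words of the evaluation of the stack machine. -/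
def ZZ (κ : List M → B) (ι : B →ₐ[ℂ] M) : List M → List (List M) → B → B
  | [], st, acc => if st = [] then acc else 0
  | m :: l, st, acc =>
    (ZZ κ ι l ([m] :: st) acc + ZZ κ ι l (clZ κ ι [m] st acc).1 (clZ κ ι [m] st acc).2) +
    (match st with
    | [] => 0
    | ts :: rest => ZZ κ ι l ((m :: ts) :: rest) acc +
        ZZ κ ι l (clZ κ ι (m :: ts) rest acc).1 (clZ κ ι (m :: ts) rest acc).2)

lemma clZ_length (κ : List M → B) (ι : B →ₐ[ℂ] M) (ts : List M) (rest : List (List M)) (acc : B) :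
    (clZ κ ι ts rest acc).1.length = rest.length := by
  cases rest <;> simp [clZ]

lemma sum_words (κ : List M → B) (ι : B →ₐ[ℂ] M) : ∀ (n : ℕ) (m : Fin n → M)
    (s : List (List M) × B),
    (∑ w : Fin n → Bool × Bool, if dval s.1.length (List.ofFn w) then
      ((List.ofFn fun i => (w i, m i)).foldl (stepW κ ι) s).2 else 0)
    = ZZ κ ι (List.ofFn m) s.1 s.2 := by
  intro n
  induction n with
  | zero => intro m s; simp [ZZ, dval]
  | succ n ih =>
    intro m s
    rw [← (Fin.consEquiv (fun _ => Bool × Bool)).sum_comp, Fintype.sum_prod_type,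
      Fintype.sum_prod_type]
    simp only [Fin.consEquiv_apply, List.ofFn_succ, Fin.cons_zero, Fin.cons_succ,
      List.foldl_cons, Fintype.sum_bool, dval]
    obtain ⟨st, acc⟩ := s
    have key : ∀ (s' : List (List M) × B) (d : ℕ), s'.1.length = d →
      (∑ w : Fin n → Bool × Bool, if dval d (List.ofFn w) then
      ((List.ofFn fun i => (w i, m i.succ)).foldl (stepW κ ι) s').2 else 0) =
      ZZ κ ι (List.ofFn fun i => m i.succ) s'.1 s'.2 := by
      rintro s' d rfl
      exact ih _ s'
    rcases st with _ | ⟨ts, rest⟩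
    · simp only [ZZ]
      rw [add_comm (ZZ κ ι _ [[m 0]] acc)]
      congr 1
      · congr 1
        · simp [stepW]
          refine (key (clZ κ ι [m 0] [] acc) 0 (by simp [clZ]))
        · simp [stepW]
          exact key ([[m 0]], acc) 1 (by simp)
      · simp
    · simp only [ZZ]
      rw [add_comm (ZZ κ ι _ ([m 0] :: ts :: rest) acc),
        add_comm (ZZ κ ι _ ((m 0 :: ts) :: rest) acc)]
      congr 1
      · congr 1
        · simp [stepW]
          refine (key (clZ κ ι [m 0] (ts :: rest) acc) _ (by simp [clZ]))
        · simp [stepW]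
          exact key ([m 0] :: ts :: rest, acc) _ (by simp)
      · congr 1
        · simp [stepW]
          refine (key (clZ κ ι (m 0 :: ts) rest acc) _ (by simp [clZ_length]))
        · simp [stepW]
          exact key ((m 0 :: ts) :: rest, acc) _ (by simp)

lemma E_eq_ZZ (ι : B →ₐ[ℂ] M) (E : M →ₗ[ℂ] B) (hE1 : E 1 = 1) (κ : MultiplicativeMap ι)
    (hκ : IsCumulantMap ι E κ) (l : List M) : E l.prod = ZZ κ.toFun ι l [] 1 := by
  rcases l with _ | ⟨m, l⟩
  · simp [ZZ, hE1]
  · have h := hκ (m :: l).length (m :: l).get (by simp)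
    have e1 : (List.finRange (m :: l).length).map (m :: l).get = m :: l := by
      rw [← List.ofFn_eq_map, List.ofFn_get]
    rw [e1] at h
    rw [h]
    simp only [bracketing_eq]
    rw [sum_NC_eq (fun w => ((List.ofFn fun i => (w i, (m :: l).get i)).foldl
      (stepW κ.toFun ι) ([], 1)).2)]
    simp only [WValid_iff]
    have := sum_words κ.toFun ι (m :: l).length (m :: l).get ([], 1)
    rw [List.ofFn_get] at this
    exact this

end Machine

section Walk
variable {B M : Type*} [Ring B] [Algebra ℂ B] [Ring M] [Algebra ℂ M]

/-- Sum over the choice of a gap. -/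
def DD : List M → (B → M → List M → B) → (B → B) → (List M → B) → B
  | [], _, e, Q => e (Q [])
  | m :: l, K, e, Q => DD l K e (fun R => Q (m :: R)) + K (Q []) m l

lemma DD_add (K : B → M → List M → B) (e : B → B) (hK : ∀ b b' m l, K (b + b') m l = K b m l + K b' m l)
    (he : ∀ b b', e (b + b') = e b + e b') : ∀ (l : List M) (Q Q' : List M → B),
    DD l K e (fun R => Q R + Q' R) = DD l K e Q + DD l K e Q' := by
  intro l
  induction l with
  | nil => intro Q Q'; simp [DD, he]
  | cons m l ih => intro Q Q'; simp only [DD]; rw [ih, hK]; abel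

lemma DD_split (K : B → M → List M → B) (e : B → B) : ∀ (l : List M) (Q : List M → B),
    DD l K e Q = DD l K (fun _ => 0) Q + e (Q l) := by
  intro l
  induction l with
  | nil => intro Q; simp [DD]
  | cons m l ih => intro Q; simp only [DD]; rw [ih]; abel

/-- Sum over all choices of the block of `x`, with current gap `g`. -/
def TT (ι : B →ₐ[ℂ] M) (E : M →ₗ[ℂ] B) : List M → (List M → B) → M → M → B
  | [], f, x, g => f [x] * E g
  | m :: l, f, x, g => TT ι E l f x (g * m) + TT ι E l (fun ys => f ((x * ι (E g)) :: ys)) m 1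

variable (ι : B →ₐ[ℂ] M) (E : M →ₗ[ℂ] B)

lemma TT_congr : ∀ (l : List M) (f f' : List M → B) (x g : M), (∀ z ys, f (z :: ys) = f' (z :: ys)) →
    TT ι E l f x g = TT ι E l f' x g := by
  intro l
  induction l with
  | nil => intro f f' x g h; simp [TT, h]
  | cons m l ih =>
    intro f f' x g h
    simp only [TT]
    rw [ih f f' x (g * m) h]
    congr 1
    apply ih
    intro z ys; apply h

lemma TT_add : ∀ (l : List M) (f f' : List M → B) (x g : M),
    TT ι E l (fun ys => f ys + f' ys) x g = TT ι E l f x g + TT ι E l f' x g := by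
  intro l
  induction l with
  | nil => intro f f' x g; simp [TT, add_mul]
  | cons m l ih =>
    intro f f' x g
    simp only [TT]
    rw [ih f f', ih (fun ys => f ((x * ι (E g)) :: ys)) (fun ys => f' ((x * ι (E g)) :: ys))]
    abel

lemma TT_zero : ∀ (l : List M) (x g : M), TT ι E l (fun _ => 0) x g = 0 := by
  intro l
  induction l with
  | nil => intro x g; simp [TT]
  | cons m l ih => intro x g; simp [TT, ih]

lemma TT_sub (l : List M) (f f' : List M → B) (x g : M) :
    TT ι E l (fun ys => f ys - f' ys) x g = TT ι E l f x g - TT ι E l f' x g := by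
  rw [eq_sub_iff_add_eq, ← TT_add]
  simp

lemma TT_eq_DD : ∀ (l : List M) (f : List M → B) (x g : M),
    TT ι E l f x g = DD l (fun b m l => TT ι E l (fun ys => f ((x * ι b) :: ys)) m 1)
      (fun b => f [x] * b) (fun R => E (g * R.prod)) := by
  intro l
  induction l with
  | nil => intro f x g; simp [DD, TT]
  | cons m l ih =>
    intro f x g
    simp only [DD, TT]
    rw [ih]
    simp [mul_assoc]

variable {ι} {E}

/-- additivity in one slot -/
lemma map_add_b (κ : MultiplicativeMap ι) (pre : List M) (x : M) (b b' : B) (post : List M) :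
    κ.toFun (pre ++ (x * ι (b + b')) :: post) =
      κ.toFun (pre ++ (x * ι b) :: post) + κ.toFun (pre ++ (x * ι b') :: post) := by
  rw [map_add, mul_add, κ.map_add]

lemma ZZ_acc (κ : List M → B) (ι : B →ₐ[ℂ] M) (b : B) : ∀ (l : List M) (st : List (List M)) (acc : B),
    ZZ κ ι l st (b * acc) = b * ZZ κ ι l st acc := by
  intro l
  induction l with
  | nil => intro st acc; simp [ZZ]
  | cons m l ih =>
    intro st acc
    rcases st with _ | ⟨ts, _ | ⟨us, r⟩⟩ <;> simp only [ZZ, clZ, mul_assoc, ih, mul_add] <;> simp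

lemma ZZ_eq_TT_aux (hE1 : E 1 = 1) (κ : MultiplicativeMap ι)
    (hZ : ∀ l : List M, E l.prod = ZZ κ.toFun ι l [] 1) (n : ℕ)
    (IH : ∀ l : List M, l.length < n → ∀ (m : M) (ts : List M),
      ZZ κ.toFun ι l [m :: ts] 1 + κ.toFun (m :: ts).reverse * E l.prod =
        TT ι E l (fun ys => κ.toFun (ts.reverse ++ ys)) m 1) (a : M) (ts : List M) :
    ∀ (l : List M), l.length ≤ n → ∀ (up : List (List M)) (b : B),
      ZZ κ.toFun ι l (up ++ [(a * ι b) :: ts]) 1 =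
        DD l (fun b m l => TT ι E l (fun ys => κ.toFun (ts.reverse ++ (a * ι b) :: ys)) m 1)
          (fun _ => 0) (fun R => ZZ κ.toFun ι R up b) := by
  have hK : ∀ (b b' : B) (m : M) (l : List M),
      TT ι E l (fun ys => κ.toFun (ts.reverse ++ (a * ι (b + b')) :: ys)) m 1 =
      TT ι E l (fun ys => κ.toFun (ts.reverse ++ (a * ι b) :: ys)) m 1 +
      TT ι E l (fun ys => κ.toFun (ts.reverse ++ (a * ι b') :: ys)) m 1 := by
    intro b b' m l
    rw [← TT_add]
    congr 1
    funext ys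
    exact map_add_b κ _ _ _ _ _
  have hK0 : ∀ (m : M) (l : List M),
      TT ι E l (fun ys => κ.toFun (ts.reverse ++ (a * ι 0) :: ys)) m 1 = 0 := by
    intro m l
    have := hK 0 0 m l
    rw [add_zero] at this
    exact left_eq_add.1 this
  intro l
  induction l with
  | nil => intro _ up b; simp [ZZ, DD]
  | cons m l ih =>
    intro hl up b
    have hl' : l.length < n := by simp at hl; omega
    have ih := ih hl'.le
    simp only [DD]
    rcases up with _ | ⟨us, up⟩
    · have e1 : ∀ R, ZZ κ.toFun ι (m :: R) [] b =
          ZZ κ.toFun ι R [[m]] b + ZZ κ.toFun ι R [] (b * κ.toFun [m]) := by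
        intro R; simp [ZZ, clZ]
      simp only [e1]
      rw [DD_add _ _ hK (by simp), ← ih, ← ih]
      have hI := IH l hl' m ((a * ι b) :: ts)
      rw [hZ, ← ZZ_acc] at hI
      simp only [List.reverse_cons, List.append_assoc, List.cons_append, List.nil_append,
        mul_one] at hI
      have e2 : ZZ κ.toFun ι [] [] b = b := by simp [ZZ]
      rw [e2, ← hI]
      simp [ZZ, clZ, closeArg, mul_assoc]
    · have e2 : ZZ κ.toFun ι [] (us :: up) b = 0 := by simp [ZZ]
      rw [e2, hK0, add_zero]
      rcases up with _ | ⟨vs, up⟩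
      · have e1 : ∀ R, ZZ κ.toFun ι (m :: R) [us] b =
          (ZZ κ.toFun ι R ([m] :: [us]) b + ZZ κ.toFun ι R [closeArg ι (κ.toFun [m]) us] b) +
          (ZZ κ.toFun ι R [m :: us] b + ZZ κ.toFun ι R [] (b * κ.toFun (m :: us).reverse)) := by
          intro R; simp [ZZ, clZ]
        simp only [e1]
        rw [DD_add _ _ hK (by simp), DD_add _ _ hK (by simp), DD_add _ _ hK (by simp),
          ← ih, ← ih, ← ih, ← ih]
        simp [ZZ, clZ, closeArg, mul_assoc]
      · have e1 : ∀ R, ZZ κ.toFun ι (m :: R) (us :: vs :: up) b =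
          (ZZ κ.toFun ι R ([m] :: us :: vs :: up) b +
            ZZ κ.toFun ι R (closeArg ι (κ.toFun [m]) us :: vs :: up) b) +
          (ZZ κ.toFun ι R ((m :: us) :: vs :: up) b +
            ZZ κ.toFun ι R (closeArg ι (κ.toFun (m :: us).reverse) vs :: up) b) := by
          intro R; simp [ZZ, clZ]
        simp only [e1]
        rw [DD_add _ _ hK (by simp), DD_add _ _ hK (by simp), DD_add _ _ hK (by simp),
          ← ih, ← ih, ← ih, ← ih]
        simp [ZZ, clZ]

lemma ZZ_eq_TT (hE1 : E 1 = 1) (κ : MultiplicativeMap ι)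
    (hZ : ∀ l : List M, E l.prod = ZZ κ.toFun ι l [] 1) : ∀ (n : ℕ) (l : List M), l.length < n →
      ∀ (m : M) (ts : List M),
      ZZ κ.toFun ι l [m :: ts] 1 + κ.toFun (m :: ts).reverse * E l.prod =
        TT ι E l (fun ys => κ.toFun (ts.reverse ++ ys)) m 1 := by
  intro n
  induction n with
  | zero => intro l h; omega
  | succ n IH =>
    intro l hl m ts
    have h := ZZ_eq_TT_aux hE1 κ hZ n IH m ts l (by omega) [] 1
    simp only [map_one, mul_one, List.nil_append, ← hZ] at h
    rw [h, TT_eq_DD, DD_split _ (fun b => _ * b)]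
    simp

/-- The first-block recursion. -/
lemma left_rec (hE1 : E 1 = 1) (κ : MultiplicativeMap ι) (hκ : IsCumulantMap ι E κ)
    (m : M) (l : List M) : E (m * l.prod) = TT ι E l κ.toFun m 1 := by
  have hZ := E_eq_ZZ ι E hE1 κ hκ
  have h := ZZ_eq_TT hE1 κ hZ (l.length + 1) l (by omega) m []
  have h2 := hZ (m :: l)
  rw [List.prod_cons] at h2
  rw [h2]
  simp only [List.reverse_nil, List.nil_append] at h
  rw [← h, hZ l, ← ZZ_acc]
  simp [ZZ, clZ]

end Walk

section Product
variable {B M : Type*} [Ring B] [Algebra ℂ B] [Ring M] [Algebra ℂ M]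

/-- Sum over splittings of a list, the first part getting at least one more element. -/
def spl1 (φ : List M → List M → B) : List M → List M → B
  | [], _ => 0
  | z :: zs, q => φ (q ++ [z]) zs + spl1 φ zs (q ++ [z])

/-- left multiplication of the head -/
def lmul (x : M) : List M → List M
  | [] => []
  | y :: ys => (x * y) :: ys

variable {ι : B →ₐ[ℂ] M} {E : M →ₗ[ℂ] B}

lemma spl1_congr (φ φ' : List M → List M → B) : ∀ (zs q : List M),
    (∀ q1 q2, q1 ≠ [] → q1 ++ q2 = q ++ zs → φ q1 q2 = φ' q1 q2) →
    spl1 φ zs q = spl1 φ' zs q := by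
  intro zs
  induction zs with
  | nil => intro q h; rfl
  | cons z zs ih =>
    intro q h
    simp only [spl1]
    rw [h (q ++ [z]) zs (by simp) (by simp), ih]
    intro q1 q2 h1 h2
    exact h q1 q2 h1 (by simpa using h2)

lemma spl1_zero : ∀ (zs q : List M), spl1 (fun _ _ => (0 : B)) zs q = 0 := by
  intro zs
  induction zs with
  | nil => intro q; rfl
  | cons z zs ih => intro q; simp [spl1, ih]

lemma TT_lmul (f : List M → B) (x : M) : ∀ (v : List M) (f : List M → B) (y g : M),
    TT ι E v f (x * y) g = TT ι E v (fun ys => f (lmul x ys)) y g := by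
  intro v
  induction v with
  | nil => intro f y g; simp [TT, lmul]
  | cons m v ih => 
    intro f y g
    simp only [TT]
    rw [ih f y (g * m)]
    simp only [lmul, mul_assoc]

lemma TT_spl (Φ : List M → List M → List M → B) (v : List M) (y g : M) : ∀ (pp q : List M),
    TT ι E v (fun ys => spl1 (fun p1 p2 => Φ p1 p2 ys) pp q) y g =
      spl1 (fun p1 p2 => TT ι E v (Φ p1 p2) y g) pp q := by
  intro pp
  induction pp with
  | nil => intro q; simp [spl1, TT_zero]
  | cons z zs ih => intro q; simp only [spl1]; rw [TT_add, ih]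

/-- Expansion of the first gap. -/
lemma L1_aux (κ : MultiplicativeMap ι) (pp : List M) (x : M) : ∀ (v q : List M) (y g : M),
    TT ι E v (fun zs => spl1 (fun q1 q2 => κ.toFun (pp ++ (x * ι (κ.toFun q1)) :: q2)) zs q) y g =
      DD v (fun b m l => TT ι E l (fun ys => κ.toFun (pp ++ (x * ι b) :: ys)) m 1)
      (fun b => κ.toFun (pp ++ [x]) * b)
      (fun R => TT ι E R (fun ys => κ.toFun (q ++ ys)) y g) := by
  intro v
  induction v with
  | nil =>
    intro q y g
    simp only [TT, DD, spl1, add_zero]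
    rw [κ.B_right, mul_assoc]
  | cons m v ih =>
    intro q y g
    simp only [TT, DD, spl1]
    rw [TT_add, ih, ih, DD_add]
    · have : κ.toFun (q ++ [y]) * E g = κ.toFun (q ++ [y * ι (E g)]) := by rw [κ.B_right]
      rw [this]
      simp only [List.append_assoc, List.singleton_append]
      abel
    · intro b b' m l
      rw [← TT_add]
      congr 1
      funext ys
      exact map_add_b κ _ _ _ _ _
    · intro b b'; rw [mul_add]

lemma L1 (κ : MultiplicativeMap ι) (hR : ∀ m l, E (m * l.prod) = TT ι E l κ.toFun m 1)
    (pp : List M) (x y : M) (v : List M) :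
    TT ι E v (fun ys => κ.toFun (pp ++ ys)) x y =
    TT ι E v (fun zs => spl1 (fun q1 q2 => κ.toFun (pp ++ (x * ι (κ.toFun q1)) :: q2)) zs []) y 1 := by
  rw [L1_aux, TT_eq_DD]
  simp only [hR, List.nil_append]

/-- Walk through a list with a continuation. -/
def JJ (ι : B →ₐ[ℂ] M) (E : M →ₗ[ℂ] B) :
    List M → (List M → M → M → B) → List M → M → M → B
  | [], k, pre, a, g => k pre a g
  | m :: u, k, pre, a, g => JJ ι E u k pre a (g * m) + JJ ι E u k (pre ++ [a * ι (E g)]) m 1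

lemma JJ_add (k k' : List M → M → M → B) : ∀ (u pre : List M) (a g : M),
    JJ ι E u (fun p a g => k p a g + k' p a g) pre a g =
      JJ ι E u k pre a g + JJ ι E u k' pre a g := by
  intro u
  induction u with
  | nil => intro pre a g; rfl
  | cons m u ih => intro pre a g; simp only [JJ]; rw [ih, ih]; abel

lemma JJ_sub (k k' : List M → M → M → B) (u pre : List M) (a g : M) :
    JJ ι E u (fun p a g => k p a g - k' p a g) pre a g =
      JJ ι E u k pre a g - JJ ι E u k' pre a g := by
  rw [eq_sub_iff_add_eq, ← JJ_add]; simp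

lemma JJ_shift (k : List M → M → M → B) : ∀ (u p s : List M) (a g : M),
    JJ ι E u k (p ++ s) a g = JJ ι E u (fun s a g => k (p ++ s) a g) s a g := by
  intro u
  induction u with
  | nil => intro p s a g; rfl
  | cons m u ih =>
    intro p s a g; simp only [JJ]; rw [ih, List.append_assoc, ih]

lemma JJ_map (k : List M → M → M → B) (ω : B → B) (hω : ∀ b b', ω (b + b') = ω b + ω b') :
    ∀ (u p : List M) (a g : M),
    JJ ι E u (fun s a g => ω (k s a g)) p a g = ω (JJ ι E u k p a g) := by
  intro u
  induction u with
  | nil => intro p a g; rfl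
  | cons m u ih => intro p a g; simp only [JJ]; rw [ih, ih, hω]

lemma TT_append (κ : List M → B) (w : List M) : ∀ (u pre : List M) (a g : M),
    TT ι E (u ++ w) (fun ys => κ (pre ++ ys)) a g =
      JJ ι E u (fun pre a g => TT ι E w (fun ys => κ (pre ++ ys)) a g) pre a g := by
  intro u
  induction u with
  | nil => intro pre a g; rfl
  | cons m u ih =>
    intro pre a g
    simp only [JJ, TT, List.cons_append]
    have h := ih (pre ++ [a * ι (E g)]) m 1
    rw [ih pre a (g * m), ← h]
    simp only [List.append_assoc, List.cons_append, List.nil_append]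

/-- second phase -/
def PP2 (κ : MultiplicativeMap ι) (E : M →ₗ[ℂ] B) (x : M) (u s : List M) (m g : M) : B :=
  JJ ι E u (fun s a g => κ.toFun (s ++ [a * ι (E g), x])) s m g

/-- right recursion sum -/
def RR (κ : MultiplicativeMap ι) (E : M →ₗ[ℂ] B) (x g : M) (u : List M) : B :=
  DD u (fun b m l => b * PP2 κ E x l [] m 1) (fun b => b * κ.toFun [x]) (fun R => E (g * R.prod))

/-- two-phase walk -/
def NN (κ : MultiplicativeMap ι) (E : M →ₗ[ℂ] B) (x : M) (ω : List M → B → B)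
    (u pre : List M) (a g : M) : B :=
  JJ ι E u (fun s a g => spl1 (fun p1 p2 => ω p1 (κ.toFun (p2 ++ [x])))
    (s ++ [a * ι (E g)]) pre) [] a g

/-- common correction term -/
def CC (ι : B →ₐ[ℂ] M) (E : M →ₗ[ℂ] B) (x : M) (ω : List M → B → B) :
    List M → List M → M → M → B
  | [], _, _, _ => 0
  | m :: u, pre, a, g => CC ι E x ω u pre a (g * m) +
      (ω (pre ++ [a * ι (E g)] ++ [m]) (E (u.prod * x)) + CC ι E x ω u (pre ++ [a * ι (E g)]) m 1)

lemma NN_cons (κ : MultiplicativeMap ι) (x : M) (ω : List M → B → B)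
    (hω : ∀ p b b', ω p (b + b') = ω p b + ω p b') (m : M) (u pre : List M) (a g : M) :
    NN κ E x ω (m :: u) pre a g = NN κ E x ω u pre a (g * m) +
      NN κ E x ω u (pre ++ [a * ι (E g)]) m 1 + ω (pre ++ [a * ι (E g)]) (PP2 κ E x u [] m 1) := by
  unfold NN
  simp only [JJ, List.nil_append]
  have h := JJ_shift (ι := ι) (E := E) (fun s a g =>
    spl1 (fun p1 p2 => ω p1 (κ.toFun (p2 ++ [x]))) (s ++ [a * ι (E g)]) pre)
    u [a * ι (E g)] [] m 1
  rw [List.append_nil] at h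
  rw [h]
  simp only [List.cons_append, List.nil_append, spl1]
  rw [JJ_add, JJ_map _ (ω (pre ++ [a * ι (E g)])) (hω _)]
  simp only [PP2, List.append_assoc, List.cons_append, List.nil_append]
  abel

lemma JJ_CC (x : M) (ω : List M → B → B) : ∀ (u pre : List M) (a g : M),
    JJ ι E u (fun pre a g => ω (pre ++ [a]) (E (g * x))) pre a g =
      ω (pre ++ [a]) (E (g * u.prod * x)) + CC ι E x ω u pre a g := by
  intro u
  induction u with
  | nil => intro pre a g; simp [JJ, CC]
  | cons m u ih =>
    intro pre a g
    simp only [JJ, CC, ih, one_mul, List.prod_cons, mul_assoc]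
    abel

lemma RR_cons (κ : MultiplicativeMap ι) (x g m : M) (u : List M) :
    RR κ E x g (m :: u) = RR κ E x (g * m) u + E g * PP2 κ E x u [] m 1 := by
  simp [RR, DD, mul_assoc]

lemma NN_CC (κ : MultiplicativeMap ι) (x : M) (ω : List M → B → B)
    (hω : ∀ p b b', ω p (b + b') = ω p b + ω p b')
    (hω' : ∀ p a b b', ω (p ++ [a * ι b]) b' = ω (p ++ [a]) (b * b')) :
    ∀ (u pre : List M) (a g : M),
    (∀ R : List M, R.length < u.length → RR κ E x 1 R = E (R.prod * x)) →
    NN κ E x ω u pre a g = ω (pre ++ [a]) (RR κ E x g u) + CC ι E x ω u pre a g := by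
  intro u
  induction u with
  | nil =>
    intro pre a g _
    simp [NN, JJ, spl1, CC, RR, DD, hω']
  | cons m u ih =>
    intro pre a g h
    have h' : ∀ R : List M, R.length < u.length → RR κ E x 1 R = E (R.prod * x) :=
      fun R hR => h R (by simp; omega)
    rw [NN_cons κ x ω hω, ih _ _ _ h', ih _ _ _ h', RR_cons, hω, h u (by simp), hω']
    simp only [CC]
    abel

lemma NN_kappa (κ : MultiplicativeMap ι) (x : M) : ∀ (u pre : List M) (a g : M),
    NN κ E x (fun p b => κ.toFun p * b) u pre a g =
      DD u (fun b m l => b * PP2 κ E x l [] m 1) (fun b => b * κ.toFun [x])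
        (fun R => TT ι E R (fun ys => κ.toFun (pre ++ ys)) a g) := by
  intro u
  induction u with
  | nil => intro pre a g; simp [NN, JJ, spl1, DD, TT, κ.B_right]
  | cons m u ih =>
    intro pre a g
    rw [NN_cons κ x _ (by intros; rw [mul_add]), ih, ih, ← DD_add]
    · simp [DD, TT, κ.B_right]
    · intros; rw [add_mul]
    · intros; rw [add_mul]

/-- last-block recursion -/
lemma right_rec (hE1 : E 1 = 1) (κ : MultiplicativeMap ι)
    (hR : ∀ m l, E (m * l.prod) = TT ι E l κ.toFun m 1) (x : M) :
    ∀ (n : ℕ) (R : List M), R.length < n → RR κ E x 1 R = E (R.prod * x) := by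
  intro n
  induction n with
  | zero => intro R h; omega
  | succ n IH =>
    intro R h
    rcases R with _ | ⟨r, R⟩
    · have := hR x []
      simp [TT, hE1] at this
      simp [RR, DD, hE1, this]
    · have hRn : R.length < n := by simpa using h
      have e1 : E ((r :: R).prod * x) = TT ι E (R ++ [x]) (fun ys => κ.toFun ([] ++ ys)) r 1 := by
        simp only [List.nil_append]
        rw [← hR]; simp [mul_assoc]
      rw [e1, TT_append]
      have e2 : (fun (pre : List M) (a g : M) => TT ι E [x] (fun ys => κ.toFun (pre ++ ys)) a g) =
          fun pre a g => κ.toFun (pre ++ [a]) * E (g * x) +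
            κ.toFun (pre ++ [a * ι (E g), x]) := by
        funext pre a g
        simp [TT, hE1]
      rw [e2, JJ_add, JJ_CC (ι := ι) (E := E) x (fun p b => κ.toFun p * b)]
      have hN := NN_CC (E := E) κ x (fun p b => κ.toFun p * b) (by intros; rw [mul_add])
        (by intro p a b b'; simp only [κ.B_right, mul_assoc]) R [] r 1
        (fun R' hR' => IH R' (by omega))
      rw [IH R hRn] at hN
      rw [one_mul, ← hN, NN_kappa, RR_cons, hE1, one_mul, one_mul]
      simp only [List.nil_append, ← hR]
      rfl

lemma L2 (hE1 : E 1 = 1) (κ : MultiplicativeMap ι)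
    (hR : ∀ m l, E (m * l.prod) = TT ι E l κ.toFun m 1) (x : M) (ω : List M → B → B)
    (hω : ∀ p b b', ω p (b + b') = ω p b + ω p b')
    (hω' : ∀ p a b b', ω (p ++ [a * ι b]) b' = ω (p ++ [a]) (b * b')) (u : List M) (a : M) :
    JJ ι E u (fun pre a g => ω (pre ++ [a]) (E (g * x))) [] a 1 =
    JJ ι E u (fun pre a g => spl1 (fun p1 p2 => ω p1 (κ.toFun (p2 ++ [x])))
      (pre ++ [a * ι (E g)]) []) [] a 1 := by
  have hr := fun R : List M => right_rec hE1 κ hR x (R.length + 1) R (by omega)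
  have := NN_CC (E := E) κ x ω hω hω' u [] a 1 (fun R _ => hr R)
  rw [JJ_CC, one_mul, ← hr, ← this]
  rfl

/-- defect of the product formula, first three terms -/
def dl3 (κ : MultiplicativeMap ι) (x : M) (pp ys : List M) : B :=
  κ.toFun (pp ++ lmul x ys) - κ.toFun (pp ++ x :: ys) -
    spl1 (fun q1 q2 => κ.toFun (pp ++ (x * ι (κ.toFun q1)) :: q2)) ys []

/-- defect of the product formula -/
def dl (κ : MultiplicativeMap ι) (x : M) (pp ys : List M) : B :=
  dl3 κ x pp ys -
    spl1 (fun p1 p2 => κ.toFun (p1 ++ lmul (ι (κ.toFun (p2 ++ [x]))) ys)) pp []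

lemma TT_dl3 (κ : MultiplicativeMap ι)
    (hR : ∀ m l, E (m * l.prod) = TT ι E l κ.toFun m 1) (x y : M) (pp v : List M) :
    TT ι E v (dl3 κ x pp) y 1 = TT ι E v (fun ys => κ.toFun (pp ++ ys)) (x * y) 1 -
      TT ι E v (fun ys => κ.toFun (pp ++ x :: ys)) y 1 -
      TT ι E v (fun ys => κ.toFun (pp ++ ys)) x y := by
  have : dl3 κ x pp = fun ys => (κ.toFun (pp ++ lmul x ys) - κ.toFun (pp ++ x :: ys)) -
    spl1 (fun q1 q2 => κ.toFun (pp ++ (x * ι (κ.toFun q1)) :: q2)) ys [] := rfl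
  rw [this, TT_sub, TT_sub, L1 κ hR pp x y v, TT_lmul (fun _ => (0 : B)) x v (fun ys => κ.toFun (pp ++ ys)) y 1]

lemma TT_vanish : ∀ (v : List M) (f : List M → B) (y g : M),
    (∀ z zs, zs.length ≤ v.length → f (z :: zs) = 0) → TT ι E v f y g = 0 := by
  intro v
  induction v with
  | nil => intro f y g h; simp [TT, h]
  | cons m v ih =>
    intro f y g h
    simp only [TT]
    rw [ih f _ _ (fun z zs hz => h z zs (by simp; omega)), ih, add_zero]
    intro z zs hz
    exact h _ _ (by simpa using hz)

lemma TT_top (hE1 : E 1 = 1) : ∀ (v : List M) (f : List M → B) (y : M),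
    (∀ z zs, zs.length < v.length → f (z :: zs) = 0) → TT ι E v f y 1 = f (y :: v) := by
  intro v
  induction v with
  | nil => intro f y h; simp [TT, hE1]
  | cons m v ih =>
    intro f y h
    simp only [TT]
    rw [TT_vanish v f _ _ (fun z zs hz => h z zs (by simp; omega)), ih]
    · simp [hE1]
    · intro z zs hz
      exact h _ _ (by simpa using hz)

lemma JJ_vanish (kk : List M → B) : ∀ (u pre : List M) (a g : M),
    (∀ p, p.length ≤ pre.length + u.length + 1 → p ≠ [] → kk p = 0) →
    JJ ι E u (fun pre a g => kk (pre ++ [a * ι (E g)])) pre a g = 0 := by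
  intro u
  induction u with
  | nil => intro pre a g h; exact h _ (by simp) (by simp)
  | cons m u ih =>
    intro pre a g h
    simp only [JJ]
    rw [ih, ih, add_zero]
    · intro p hp; exact h p (by simp at hp ⊢; omega)
    · intro p hp; exact h p (by simp; omega)

lemma JJ_top (hE1 : E 1 = 1) (kk : List M → B) : ∀ (u pre : List M) (a : M),
    (∀ p, p.length ≤ pre.length + u.length → p ≠ [] → kk p = 0) →
    JJ ι E u (fun pre a g => kk (pre ++ [a * ι (E g)])) pre a 1 = kk (pre ++ a :: u) := by
  intro u
  induction u with
  | nil => intro pre a h; simp [JJ, hE1]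
  | cons m u ih =>
    intro pre a h
    simp only [JJ]
    rw [ih, JJ_vanish]
    · simp [hE1]
    · intro p hp; exact h p (by simp; omega)
    · intro p hp; exact h p (by simp at hp ⊢; omega)

/-- The defect identity. -/
lemma dl_identity (hE1 : E 1 = 1) (κ : MultiplicativeMap ι)
    (hR : ∀ m l, E (m * l.prod) = TT ι E l κ.toFun m 1) (x y a : M) (u v : List M) :
    JJ ι E u (fun pre a g => TT ι E v (dl κ x (pre ++ [a * ι (E g)])) y 1) [] a 1 = 0 := by
  set ω : List M → B → B := fun p b => TT ι E v (fun ys => κ.toFun (p ++ lmul (ι b) ys)) y 1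
    with hωdef
  have hω : ∀ p b b', ω p (b + b') = ω p b + ω p b' := by
    intro p b b'
    simp only [hωdef]
    rw [← TT_add]
    apply TT_congr
    intro z ys
    simp only [lmul]
    rw [_root_.map_add, add_mul, κ.map_add]
  have hω' : ∀ p a b b', ω (p ++ [a * ι b]) b' = ω (p ++ [a]) (b * b') := by
    intro p a b b'
    simp only [hωdef]
    apply TT_congr
    intro z ys
    simp only [lmul, List.append_assoc, List.cons_append, List.nil_append]
    rw [κ.B_mid, _root_.map_mul, mul_assoc]
  have e1 : ∀ pp : List M, TT ι E v (dl κ x pp) y 1 = TT ι E v (dl3 κ x pp) y 1 -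
      spl1 (fun p1 p2 => ω p1 (κ.toFun (p2 ++ [x]))) pp [] := by
    intro pp
    have : dl κ x pp = fun ys => dl3 κ x pp ys -
      spl1 (fun p1 p2 => κ.toFun (p1 ++ lmul (ι (κ.toFun (p2 ++ [x]))) ys)) pp [] := rfl
    rw [this, TT_sub, TT_spl (fun p1 p2 ys => κ.toFun (p1 ++ lmul (ι (κ.toFun (p2 ++ [x]))) ys))]
  simp only [e1]
  rw [JJ_sub, ← L2 hE1 κ hR x ω hω hω', ← JJ_sub]
  have h1 := hR a (u ++ (x * y) :: v)
  have h2 := hR a (u ++ x :: y :: v)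
  have h3 : TT ι E (u ++ (x * y) :: v) (fun ys => κ.toFun ([] ++ ys)) a 1 -
      TT ι E (u ++ x :: y :: v) (fun ys => κ.toFun ([] ++ ys)) a 1 = 0 := by
    simp only [List.nil_append]
    rw [← h1, ← h2]
    simp [mul_assoc]
  rw [TT_append, TT_append, ← JJ_sub] at h3
  rw [← h3]
  congr 1
  funext pre a g
  rw [TT_dl3 κ hR]
  simp only [TT, hE1, map_one, mul_one, one_mul]
  have e2 : ω (pre ++ [a]) (E (g * x)) =
      TT ι E v (fun ys => κ.toFun (pre ++ a * ι (E (g * x)) :: ys)) y 1 := by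
    simp only [hωdef]
    apply TT_congr
    intro z ys
    simp only [lmul, List.append_assoc, List.cons_append, List.nil_append]
    rw [κ.B_mid]
  rw [e2]
  simp only [List.append_assoc, List.cons_append, List.nil_append, mul_assoc]
  abel

lemma dl_identity_nil (hE1 : E 1 = 1) (κ : MultiplicativeMap ι)
    (hR : ∀ m l, E (m * l.prod) = TT ι E l κ.toFun m 1) (x y : M) (v : List M) :
    TT ι E v (dl κ x []) y 1 = 0 := by
  have e : dl κ x [] = dl3 κ x [] := by funext ys; simp [dl, spl1]
  rw [e, TT_dl3 κ hR]
  have h1 := hR (x * y) v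
  have h2 := hR x (y :: v)
  simp only [TT, hE1, map_one, mul_one, one_mul, List.prod_cons] at h2
  simp only [List.nil_append]
  have h3 : TT ι E v (fun ys => κ.toFun ys) (x * y) 1 = E (x * (y * v.prod)) := by
    rw [← mul_assoc]; exact h1.symm
  rw [h3, h2]
  abel

lemma dl_zero (hE1 : E 1 = 1) (κ : MultiplicativeMap ι)
    (hR : ∀ m l, E (m * l.prod) = TT ι E l κ.toFun m 1) (x : M) :
    ∀ (n : ℕ) (pp : List M) (y : M) (v : List M), pp.length + v.length < n →
      dl κ x pp (y :: v) = 0 := by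
  intro n
  induction n with
  | zero => intro pp y v h; omega
  | succ n IH =>
    intro pp y v h
    rcases pp with _ | ⟨a, u⟩
    · rw [← TT_top (ι := ι) hE1 v (dl κ x []) y, dl_identity_nil hE1 κ hR]
      intro z zs hz
      exact IH _ _ _ (by simp at h ⊢; omega)
    · rw [← TT_top (ι := ι) hE1 v (dl κ x (a :: u)) y]
      · have := JJ_top (ι := ι) hE1 (fun p => TT ι E v (dl κ x p) y 1) u [] a
        rw [dl_identity hE1 κ hR] at this
        rw [List.nil_append] at this
        refine (this ?_).symm
        intro p hp _
        apply TT_vanish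
        intro z zs hz
        exact IH _ _ _ (by simp at h hp; omega)
      · intro z zs hz
        exact IH _ _ _ (by simp at h ⊢; omega)

/-- Cumulants with a product as entry. -/
lemma product_formula (hE1 : E 1 = 1) (κ : MultiplicativeMap ι)
    (hR : ∀ m l, E (m * l.prod) = TT ι E l κ.toFun m 1) (pre : List M) (x y : M) (post : List M) :
    κ.toFun (pre ++ (x * y) :: post) = κ.toFun (pre ++ x :: y :: post) +
      spl1 (fun q1 q2 => κ.toFun (pre ++ (x * ι (κ.toFun q1)) :: q2)) (y :: post) [] +
      spl1 (fun p1 p2 => κ.toFun (p1 ++ (ι (κ.toFun (p2 ++ [x])) * y) :: post)) pre [] := by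
  have h := dl_zero hE1 κ hR x (pre.length + post.length + 1) pre y post (by omega)
  simp only [dl, dl3, lmul] at h
  rw [sub_sub, sub_sub, sub_eq_zero] at h
  rw [h, add_assoc]

end Product

section Main
variable {B M : Type*} [Ring B] [Algebra ℂ B] [Ring M] [Algebra ℂ M]

/-- The standing assumptions. -/
structure Ctx (ι : B →ₐ[ℂ] M) (E : M →ₗ[ℂ] B) (D : Subalgebra ℂ B) (F : B →ₗ[ℂ] B)
    (κ : MultiplicativeMap ι) (N : Subalgebra ℂ M) : Prop where
  hE1 : E 1 = 1
  hEb : ∀ (b b' : B) (m : M), E (ι b * m * ι b') = b * E m * b'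
  hFD : ∀ b, F b ∈ D
  hFid : ∀ d ∈ D, F d = d
  hFb : ∀ d ∈ D, ∀ d' ∈ D, ∀ b : B, F (d * b * d') = d * F b * d'
  hR : ∀ m l, E (m * l.prod) = TT ι E l κ.toFun m 1
  hDN : ∀ d ∈ D, ι d ∈ N

variable {ι : B →ₐ[ℂ] M} {E : M →ₗ[ℂ] B} {D : Subalgebra ℂ B} {F : B →ₗ[ℂ] B}
  {κ : MultiplicativeMap ι} {N : Subalgebra ℂ M}

/-- The entry `n b`. -/
def ent (ι : B →ₐ[ℂ] M) (p : M × B) : M := p.1 * ι p.2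

/-- Centered words. -/
def Cen (E : M →ₗ[ℂ] B) (F : B →ₗ[ℂ] B) (N : Subalgebra ℂ M) (L : List (M × B)) : Prop :=
  (∀ p ∈ L, p.1 ∈ N ∧ F (E p.1) = 0) ∧ ∀ p ∈ L.dropLast, F p.2 = 0

/-- Some entry except the last one has a centered second component. -/
def Marked (F : B →ₗ[ℂ] B) (L : List (M × B)) : Prop := ∃ p ∈ L.dropLast, F p.2 = 0

lemma kap_zero (κ : MultiplicativeMap ι) (pre post : List M) :
    κ.toFun (pre ++ 0 :: post) = 0 := by
  have := κ.map_smul pre 0 0 post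
  simpa using this

lemma kap_sub (κ : MultiplicativeMap ι) (pre : List M) (x y : M) (post : List M) :
    κ.toFun (pre ++ (x - y) :: post) = κ.toFun (pre ++ x :: post) - κ.toFun (pre ++ y :: post) := by
  rw [eq_sub_iff_add_eq, ← κ.map_add, sub_add_cancel]

namespace Ctx

lemma Er (H : Ctx ι E D F κ N) (m : M) (b : B) : E (m * ι b) = E m * b := by
  simpa using H.hEb 1 b m

lemma El (H : Ctx ι E D F κ N) (m : M) (b : B) : E (ι b * m) = b * E m := by
  simpa using H.hEb b 1 m

lemma Ei (H : Ctx ι E D F κ N) (b : B) : E (ι b) = b := by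
  have := H.El 1 b
  rwa [mul_one, H.hE1, mul_one] at this

lemma Fl (H : Ctx ι E D F κ N) {d : B} (hd : d ∈ D) (b : B) : F (d * b) = d * F b := by
  simpa using H.hFb d hd 1 D.one_mem b

lemma Fr (H : Ctx ι E D F κ N) {d : B} (hd : d ∈ D) (b : B) : F (b * d) = F b * d := by
  simpa using H.hFb 1 D.one_mem d hd b

lemma F1 (H : Ctx ι E D F κ N) : F 1 = 1 := H.hFid 1 D.one_mem

lemma FF (H : Ctx ι E D F κ N) (b : B) : F (F b) = F b := H.hFid _ (H.hFD b)

lemma kap_single (H : Ctx ι E D F κ N) (m : M) : κ.toFun [m] = E m := by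
  have := H.hR m []
  simp only [TT, H.hE1, List.prod_nil, mul_one] at this
  exact this.symm

lemma TTZ1 (H : Ctx ι E D F κ N) : ∀ (l pre : List M) (a g : M),
    (∀ s t, l = s ++ t → E (g * s.prod) = 0) →
    TT ι E l (fun ys => κ.toFun (pre ++ ys)) a g = 0 := by
  intro l
  induction l with
  | nil =>
    intro pre a g h
    have := h [] [] rfl
    simp at this
    simp [TT, this]
  | cons m l ih =>
    intro pre a g h
    have h0 := h [] (m :: l) rfl
    simp at h0
    simp only [TT]
    rw [ih pre a (g * m), h0]
    · simp [kap_zero, TT_zero]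
    · intro s t hst
      have := h (m :: s) t (by rw [hst]; rfl)
      simpa [mul_assoc] using this

lemma TTZ (H : Ctx ι E D F κ N) : ∀ (l pre : List M) (a : M),
    (∀ s t u, s ≠ [] → l = t ++ s ++ u → E s.prod = 0) →
    TT ι E l (fun ys => κ.toFun (pre ++ ys)) a 1 = κ.toFun (pre ++ a :: l) := by
  intro l
  induction l with
  | nil => intro pre a h; simp [TT, H.hE1]
  | cons m l ih =>
    intro pre a h
    simp only [TT]
    rw [H.TTZ1 l pre a (1 * m), H.hE1]
    · have := ih (pre ++ [a]) m (fun s t u hs hl => h s (m :: t) u hs (by rw [hl]; rfl))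
      simpa using this
    · intro s t hst
      have := h (m :: s) [] t (by simp) (by rw [hst]; rfl)
      simpa using this

/-- If all shorter centered words vanish, the moment equals the cumulant. -/
lemma cen_E (H : Ctx ι E D F κ N) (L : List (M × B)) (hL : L ≠ [])
    (hc : Cen E F N L)
    (h : ∀ s : List (M × B), s ≠ [] → s.length < L.length → Cen E F N s →
      E (s.map (ent ι)).prod = 0) :
    E (L.map (ent ι)).prod = κ.toFun (L.map (ent ι)) := by
  rcases L with _ | ⟨p, L⟩
  · exact absurd rfl hL
  · rw [List.map_cons, List.prod_cons, H.hR]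
    have := H.TTZ (L.map (ent ι)) [] (ent ι p) ?_
    · simpa using this
    · intro s t u hs hst
      obtain ⟨w, u', hw, h1, hu⟩ := List.map_eq_append_iff.1 hst
      obtain ⟨t', s', hw', ht, hs'⟩ := List.map_eq_append_iff.1 h1
      subst hs'
      have hs0 : s' ≠ [] := by rintro rfl; simp at hs
      subst hw' hw
      refine h s' hs0 (by simp; omega) ⟨fun q hq => hc.1 q (by simp [hq]), fun q hq => hc.2 q ?_⟩
      rcases List.eq_nil_or_concat u' with rfl | ⟨v, z, rfl⟩
      · rw [List.append_nil, ← List.cons_append, List.dropLast_append_of_ne_nil hs0]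
        simp [hq]
      · have : p :: (t' ++ s' ++ (v ++ [z])) = (p :: (t' ++ s' ++ v)) ++ [z] := by simp
        rw [List.concat_eq_append, this, List.dropLast_concat]
        simp [List.mem_of_mem_dropLast hq]

/-- The cumulant condition implies that centered words vanish. -/
lemma cen_of_C (H : Ctx ι E D F κ N)
    (hC : ∀ L : List (M × B), (∀ p ∈ L, p.1 ∈ N) → ∀ n ∈ N,
      κ.toFun (L.map (ent ι) ++ [n]) =
        F (κ.toFun (L.map (fun p => p.1 * ι (F p.2)) ++ [n]))) :
    ∀ (k : ℕ) (L : List (M × B)), L.length < k → L ≠ [] → Cen E F N L →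
      E (L.map (ent ι)).prod = 0 := by
  intro k
  induction k with
  | zero => intro L h; omega
  | succ k IH =>
    intro L hk hL hc
    rw [H.cen_E L hL hc (fun s hs hsl hsc => IH s (by omega) hs hsc)]
    rcases List.eq_nil_or_concat L with rfl | ⟨L', p, rfl⟩
    · exact absurd rfl hL
    · rw [List.concat_eq_append] at hc ⊢
      obtain ⟨hc1, hc2⟩ := hc
      rw [List.dropLast_concat] at hc2
      rw [List.map_append]
      simp only [List.map_cons, List.map_nil, ent]
      rw [κ.B_right]
      have := hC L' (fun q hq => (hc1 q (by simp [hq])).1) p.1 (hc1 p (by simp)).1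
      rw [this]
      rcases L' with _ | ⟨q, L'⟩
      · simp [H.kap_single, (hc1 p (by simp)).2]
      · have h0 := kap_zero κ [] (L'.map (fun p => p.1 * ι (F p.2)) ++ [p.1])
        simp only [List.nil_append] at h0
        simp [hc2 q (by simp), h0]

end Ctx

lemma word_of_alt : ∀ (l : List (M × Bool)), l ≠ [] →
    List.IsChain (fun p q : M × Bool => p.2 ≠ q.2) l →
    (∀ p ∈ l, p.1 ∈ (if p.2 then N else ι.range) ∧ F (E p.1) = 0) →
    (∀ p ∈ l.head?, p.2 = true) → (∀ b, E (ι b) = b) →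
    ∃ L : List (M × B), L ≠ [] ∧ Cen E F N L ∧ (l.map Prod.fst).prod = (L.map (ent ι)).prod
  | [], h, _, _, _, _ => absurd rfl h
  | [p], _, _, h, hh, _ => by
    have hp : p.2 = true := hh p (by simp)
    have := h p (by simp)
    rw [hp] at this
    exact ⟨[(p.1, 1)], by simp, ⟨by simpa using this, by simp⟩, by simp [ent]⟩
  | [p, q], _, hch, h, hh, _ => by
    have hp : p.2 = true := hh p (by simp)
    have h1 := h p (by simp)
    have h2 := h q (by simp)
    simp only [List.isChain_cons_cons] at hch
    have hq : q.2 = false := by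
      have := hch.1
      rw [hp] at this
      simpa using this.symm
    rw [hp] at h1
    rw [hq] at h2
    obtain ⟨b, hb⟩ : ∃ b, ι b = q.1 := by simpa using h2.1
    exact ⟨[(p.1, b)], by simp, ⟨by simpa using h1, by simp⟩, by simp [ent, hb]⟩
  | p :: q :: r :: l, _, hch, h, hh, hEi => by
    have hp : p.2 = true := hh p (by simp)
    have h1 := h p (by simp)
    have h2 := h q (by simp)
    simp only [List.isChain_cons_cons] at hch
    have hq : q.2 = false := by
      have := hch.1
      rw [hp] at this
      simpa using this.symm
    have hr : r.2 = true := by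
      have := hch.2.1
      rw [hq] at this
      simpa using this.symm
    rw [hp] at h1
    rw [hq] at h2
    obtain ⟨b, hb⟩ : ∃ b, ι b = q.1 := by simpa using h2.1
    obtain ⟨L, hL, hc, hprod⟩ := word_of_alt (r :: l) (by simp)
      hch.2.2 (fun p hp => h p (by simp at hp ⊢; tauto)) (by simpa using hr) hEi
    refine ⟨(p.1, b) :: L, by simp, ⟨?_, ?_⟩, ?_⟩
    · intro s hs
      rcases List.mem_cons.1 hs with rfl | hs
      · simpa using h1
      · exact hc.1 s hs
    · intro s hs
      rw [List.dropLast_cons_of_ne_nil hL] at hs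
      rcases List.mem_cons.1 hs with rfl | hs
      · have := h2.2
        rw [← hb, hEi] at this
        exact this
      · exact hc.2 s hs
    · rw [List.map_cons, List.map_cons, List.prod_cons, List.prod_cons, hprod]
      simp [ent, hb, mul_assoc]

namespace Ctx

lemma free_of_cen (H : Ctx ι E D F κ N)
    (hcen : ∀ L : List (M × B), L ≠ [] → Cen E F N L → E (L.map (ent ι)).prod = 0) :
    FreeWithAmalgamation (fun m => F (E m)) N ι.range := by
  intro l hl hch h
  rcases l with _ | ⟨p, l⟩
  · exact absurd rfl hl
  · by_cases hp : p.2 = true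
    · obtain ⟨L, hL, hc, hprod⟩ := word_of_alt (ι := ι) (E := E) (F := F) (N := N)
        (p :: l) hl hch h (by simpa using hp) H.Ei
      simp only
      rw [hprod, hcen L hL hc, map_zero]
    · have hp' : p.2 = false := by simpa using hp
      have h1 := h p (by simp)
      rw [hp'] at h1
      obtain ⟨b, hb⟩ : ∃ b, ι b = p.1 := by simpa using h1.1
      rcases l with _ | ⟨q, l⟩
      · simpa using h1.2
      · have hch' : List.IsChain (fun p q : M × Bool => p.2 ≠ q.2) (p :: q :: l) := hch
        simp only [List.isChain_cons_cons] at hch'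
        have hq : q.2 = true := by
          have := hch'.1
          rw [hp'] at this
          simpa using this.symm
        obtain ⟨L, hL, hc, hprod⟩ := word_of_alt (ι := ι) (E := E) (F := F) (N := N)
          (q :: l) (by simp) hch'.2 (fun p hp => h p (by simp at hp ⊢; tauto))
          (by simpa using hq) H.Ei
        simp only
        rw [List.map_cons, List.prod_cons, hprod, ← hb, H.El, hcen L hL hc, mul_zero, map_zero]

end Ctx

/-- the alternating word of a list of pairs -/
def wrd (ι : B →ₐ[ℂ] M) : List (M × B) → List (M × Bool) → List (M × Bool)
  | [], r => r
  | p :: L, r => (p.1, true) :: (ι p.2, false) :: wrd ι L r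

lemma wrd_head : ∀ (L : List (M × B)) (r : List (M × Bool)), (∀ p ∈ r.head?, p.2 = true) →
    ∀ p ∈ (wrd ι L r).head?, p.2 = true := by
  intro L r h
  cases L with
  | nil => exact h
  | cons a L => simp [wrd]

lemma wrd_chain : ∀ (L : List (M × B)) (r : List (M × Bool)),
    List.IsChain (fun p q : M × Bool => p.2 ≠ q.2) r → (∀ p ∈ r.head?, p.2 = true) →
    List.IsChain (fun p q : M × Bool => p.2 ≠ q.2) (wrd ι L r) := by
  intro L
  induction L with
  | nil => intro r h _; exact h
  | cons p L ih =>
    intro r h h'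
    simp only [wrd, List.isChain_cons_cons]
    refine ⟨by simp, ?_⟩
    rw [List.isChain_cons]
    refine ⟨?_, ih r h h'⟩
    intro q hq
    rw [wrd_head L r h' q hq]
    simp

lemma wrd_prod : ∀ (L : List (M × B)) (r : List (M × Bool)),
    ((wrd ι L r).map Prod.fst).prod = (L.map (ent ι)).prod * (r.map Prod.fst).prod := by
  intro L
  induction L with
  | nil => intro r; simp [wrd]
  | cons p L ih => intro r; simp [wrd, ih, ent, mul_assoc]

lemma wrd_mem (hEi : ∀ b, E (ι b) = b) : ∀ (L : List (M × B)) (r : List (M × Bool)),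
    (∀ p ∈ L, p.1 ∈ N ∧ F (E p.1) = 0) → (∀ p ∈ L, F p.2 = 0) →
    (∀ p ∈ r, p.1 ∈ (if p.2 then N else ι.range) ∧ F (E p.1) = 0) →
    (∀ p ∈ wrd ι L r, p.1 ∈ (if p.2 then N else ι.range) ∧ F (E p.1) = 0) := by
  intro L
  induction L with
  | nil => intro r _ _ h; exact h
  | cons q L ih =>
    intro r h1 h2 h3 p hp
    simp only [wrd, List.mem_cons] at hp
    rcases hp with rfl | rfl | hp
    · simpa using h1 q (by simp)
    · simpa [hEi] using h2 q (by simp)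
    · exact ih r (fun p hp => h1 p (by simp [hp])) (fun p hp => h2 p (by simp [hp])) h3 p hp

namespace Ctx

lemma cen_of_free (H : Ctx ι E D F κ N)
    (hf : ∀ b₁ : B, (∀ b₂ : B, F (b₁ * b₂) = 0) → b₁ = 0)
    (hfree : FreeWithAmalgamation (fun m => F (E m)) N ι.range)
    (L : List (M × B)) (hL : L ≠ []) (hc : Cen E F N L) : E (L.map (ent ι)).prod = 0 := by
  rcases List.eq_nil_or_concat L with rfl | ⟨L', p, rfl⟩
  · exact absurd rfl hL
  · rw [List.concat_eq_append] at hc ⊢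
    obtain ⟨hc1, hc2⟩ := hc
    rw [List.dropLast_concat] at hc2
    have e : ∀ b, ((L'.map (ent ι)).prod * p.1) * ι b =
        ((wrd ι (L' ++ [(p.1, b)]) []).map Prod.fst).prod := by
      intro b
      rw [wrd_prod]; simp [ent, mul_assoc]
    have e0 : (L'.map (ent ι)).prod * p.1 =
        ((wrd ι L' [(p.1, true)]).map Prod.fst).prod := by
      rw [wrd_prod]; simp
    have h0 : F (E ((L'.map (ent ι)).prod * p.1)) = 0 := by
      rw [e0]
      refine hfree _ ?_ (wrd_chain _ _ (by simp) (by simp)) (wrd_mem H.Ei _ _ ?_ hc2 ?_)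
      · cases L' <;> simp [wrd]
      · intro q hq; exact hc1 q (by simp [hq])
      · simpa using hc1 p (by simp)
    have key : E ((L'.map (ent ι)).prod * p.1) = 0 := by
      apply hf
      intro b
      have hb : b = (b - F b) + F b := by abel
      rw [hb, mul_add, _root_.map_add, H.Fr (H.hFD b), h0, zero_mul, add_zero, ← H.Er, e]
      refine hfree _ ?_ (wrd_chain _ _ (by simp) (by simp)) (wrd_mem H.Ei _ _ ?_ ?_ (by simp))
      · cases L' <;> simp [wrd]
      · intro q hq
        rcases List.mem_append.1 hq with hq | hq
        · exact hc1 q (by simp [hq])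
        · rw [List.mem_singleton] at hq
          subst hq
          exact hc1 p (by simp)
      · intro q hq
        rcases List.mem_append.1 hq with hq | hq
        · exact hc2 q hq
        · rw [List.mem_singleton] at hq
          subst hq
          simp [H.FF]
    rw [List.map_append, List.prod_append]
    simp only [List.map_cons, List.map_nil, List.prod_cons, List.prod_nil, mul_one, ent]
    rw [← mul_assoc, H.Er]
    rw [key, zero_mul]

end Ctx

end Main

section Main2
variable {B M : Type*} [Ring B] [Algebra ℂ B] [Ring M] [Algebra ℂ M]
variable {ι : B →ₐ[ℂ] M} {E : M →ₗ[ℂ] B} {D : Subalgebra ℂ B} {F : B →ₗ[ℂ] B}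
  {κ : MultiplicativeMap ι} {N : Subalgebra ℂ M}

lemma spl1_eq_zero (φ : List M → List M → B) : ∀ (zs q : List M),
    (∀ q1 q2, q.length < q1.length → q1 ++ q2 = q ++ zs → φ q1 q2 = 0) →
    spl1 φ zs q = 0 := by
  intro zs
  induction zs with
  | nil => intro q h; rfl
  | cons z zs ih =>
    intro q h
    simp only [spl1]
    rw [h (q ++ [z]) zs (by simp) (by simp), ih, add_zero]
    intro q1 q2 h1 h2
    exact h q1 q2 (by simp at h1; omega) (by simpa using h2)

lemma spl1_last (φ : List M → List M → B) : ∀ (zs : List M) (z : M) (q : List M),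
    (∀ q1 q2, q2 ≠ [] → q.length < q1.length → q1 ++ q2 = q ++ z :: zs → φ q1 q2 = 0) →
    spl1 φ (z :: zs) q = φ (q ++ z :: zs) [] := by
  intro zs
  induction zs with
  | nil => intro z q h; simp [spl1]
  | cons w zs ih =>
    intro z q h
    rw [spl1, h (q ++ [z]) (w :: zs) (by simp) (by simp) (by simp), zero_add, ih]
    · simp
    · intro q1 q2 h0 h1 h2
      exact h q1 q2 h0 (by simp at h1; omega) (by simpa using h2)

lemma spl1_mem (φ : List M → List M → B) : ∀ (zs q : List M),
    (∀ q1 q2, q.length < q1.length → q1 ++ q2 = q ++ zs → φ q1 q2 ∈ D) →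
    spl1 φ zs q ∈ D := by
  intro zs
  induction zs with
  | nil => intro q h; exact D.zero_mem
  | cons z zs ih =>
    intro q h
    simp only [spl1]
    refine D.add_mem (h (q ++ [z]) zs (by simp) (by simp)) (ih _ ?_)
    intro q1 q2 h1 h2
    exact h q1 q2 (by simp at h1; omega) (by simpa using h2)

namespace Ctx

lemma vanish_one (H : Ctx ι E D F κ N) : ∀ (k : ℕ) (pre post : List M),
    pre.length + post.length < k → pre ++ post ≠ [] → κ.toFun (pre ++ 1 :: post) = 0 := by
  intro k
  induction k with
  | zero => intro pre post h; omega
  | succ k IH =>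
    intro pre post hk hne
    rcases List.eq_nil_or_concat pre with rfl | ⟨pre', x, rfl⟩
    · rcases post with _ | ⟨z, post⟩
      · simp at hne
      · have h := product_formula H.hE1 κ H.hR [] 1 z post
        rw [spl1_last] at h
        · simp only [spl1, List.nil_append, one_mul, add_zero, H.kap_single, H.Ei] at h
          simpa using h
        · intro q1 q2 h0 h1 h2
          have e : (1 : M) * ι (κ.toFun q1) = ι (κ.toFun q1) * 1 := by simp
          have hl := congrArg List.length h2
          simp at hl h1 hk
          have := IH [] q2 (by simp; omega) (by simpa using h0)
          simp only [List.nil_append] at this ⊢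
          rw [e, κ.B_left, this, mul_zero]
    · rw [List.concat_eq_append] at *
      have h := product_formula H.hE1 κ H.hR pre' x 1 post
      rw [spl1, spl1_eq_zero _ post, spl1_eq_zero _ pre'] at h
      · simp only [List.nil_append, H.kap_single, H.hE1, map_one, mul_one, add_zero] at h
        simp only [List.append_assoc, List.cons_append, List.nil_append]
        simpa using h
      · intro p1 p2 h1 h2
        have hl := congrArg List.length h2
        rcases List.eq_nil_or_concat p1 with rfl | ⟨p1, z, rfl⟩
        · simp at h1
        · simp at hl h1 hk
          have := IH (p1 ++ [z * ι (κ.toFun (p2 ++ [x]))]) post (by simp; omega) (by simp)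
          rw [List.concat_eq_append]
          simp only [List.append_assoc, List.cons_append, List.nil_append] at this ⊢
          rw [← κ.B_mid, this]
      · intro q1 q2 h1 h2
        have hl := congrArg List.length h2
        rcases q1 with _ | ⟨w, s⟩
        · simp at h1
        · simp at hl h1 hk h2
          have := IH [] s (by simp; omega) (by simpa using List.ne_nil_of_length_pos h1)
          simp only [List.nil_append] at this
          rw [h2.1, this, map_zero, mul_zero, kap_zero]

lemma vanish (H : Ctx ι E D F κ N) (pre post : List M) (b : B) (hne : pre ++ post ≠ []) :
    κ.toFun (pre ++ ι b :: post) = 0 := by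
  have h1 := fun pre post : List M => H.vanish_one (pre.length + post.length + 1) pre post (by omega)
  rcases List.eq_nil_or_concat pre with rfl | ⟨pre', x, rfl⟩
  · have e := κ.B_left b 1 post
    have := h1 [] post hne
    simp only [List.nil_append] at this ⊢
    rw [mul_one, this, mul_zero] at e
    exact e
  · rw [List.concat_eq_append] at *
    have e := κ.B_mid pre' x b 1 post
    have := h1 (pre' ++ [x * ι b]) post (by simp)
    simp only [List.append_assoc, List.cons_append, List.nil_append] at this ⊢
    rw [mul_one, this] at e
    exact e.symm

lemma kap_D (H : Ctx ι E D F κ N) (hED : ∀ n ∈ N, E n ∈ D) : ∀ (k : ℕ) (l : List M),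
    l.length < k → l ≠ [] → (∀ n ∈ l, n ∈ N) → κ.toFun l ∈ D := by
  intro k
  induction k with
  | zero => intro l h; omega
  | succ k IH =>
    intro l hk hne hN
    rcases l with _ | ⟨n, _ | ⟨m, post⟩⟩
    · exact absurd rfl hne
    · rw [H.kap_single]; exact hED n (hN n (by simp))
    · have h := product_formula H.hE1 κ H.hR [] n m post
      simp only [List.nil_append, spl1.eq_1, add_zero] at h
      rw [← sub_eq_iff_eq_add] at h
      rw [← h]
      simp at hk
      refine D.sub_mem (IH _ (by simp; omega) (by simp) ?_) (spl1_mem _ _ _ ?_)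
      · intro q hq
        rcases List.mem_cons.1 hq with rfl | hq
        · exact N.mul_mem (hN _ (by simp)) (hN _ (by simp))
        · exact hN _ (by simp [hq])
      · intro q1 q2 h1 h2
        have hl := congrArg List.length h2
        simp at hl h1 h2
        have h3 : κ.toFun q1 ∈ D := by
          refine IH q1 (by omega) (List.ne_nil_of_length_pos h1) ?_
          intro q hq
          apply hN
          have : q ∈ m :: post := by rw [← h2]; simp [hq]
          exact List.mem_cons_of_mem _ this
        refine IH _ (by simp; omega) (by simp) ?_
        intro q hq
        rcases List.mem_cons.1 hq with rfl | hq
        · exact N.mul_mem (hN _ (by simp)) (H.hDN _ h3)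
        · apply hN
          have : q ∈ m :: post := by rw [← h2]; simp [hq]
          exact List.mem_cons_of_mem _ this

/-- Replace the coefficients by their expectations. -/
lemma Frep (H : Ctx ι E D F κ N) (k : ℕ)
    (HZ : ∀ L : List (M × B), L.length < k → (∀ p ∈ L, p.1 ∈ N) → Marked F L →
      κ.toFun (L.map (ent ι)) = 0) (n : M) (hn : n ∈ N) :
    ∀ (L A : List (M × B)), A.length + L.length + 1 < k → (∀ p ∈ A ++ L, p.1 ∈ N) →
      κ.toFun (A.map (ent ι) ++ L.map (ent ι) ++ [n]) =
        κ.toFun (A.map (ent ι) ++ L.map (fun p => p.1 * ι (F p.2)) ++ [n]) := by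
  intro L
  induction L with
  | nil => intro A _ _; rfl
  | cons p L ih =>
    intro A hk hN
    simp at hk
    have e : ent ι p = p.1 * ι (p.2 - F p.2) + p.1 * ι (F p.2) := by
      rw [← mul_add, ← _root_.map_add]; simp [ent]
    have h1 := ih (A ++ [(p.1, F p.2)]) (by simp; omega) (by
      intro q hq
      simp at hq
      rcases hq with hq | rfl | hq
      · exact hN q (by simp [hq])
      · exact hN p (by simp)
      · exact hN q (by simp [hq]))
    have h2 := HZ (A ++ (p.1, p.2 - F p.2) :: (L ++ [(n, 1)])) (by simp; omega) (by
      intro q hq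
      simp at hq
      rcases hq with hq | rfl | hq | rfl
      · exact hN q (by simp [hq])
      · exact hN p (by simp)
      · exact hN q (by simp [hq])
      · exact hn)
      ⟨(p.1, p.2 - F p.2), by
        rw [List.dropLast_append_of_ne_nil (by simp), List.dropLast_cons_of_ne_nil (by simp)]
        simp, by simp [H.FF]⟩
    simp only [List.map_append, List.map_cons, List.map_nil, List.append_assoc, List.cons_append,
      List.nil_append] at h1 h2 ⊢
    rw [e, κ.map_add]
    simp only [ent, map_one, mul_one] at h1 h2 ⊢
    rw [h2, zero_add, h1]

lemma Dm (H : Ctx ι E D F κ N) (hED : ∀ n ∈ N, E n ∈ D) (k : ℕ)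
    (HZ : ∀ L : List (M × B), L.length < k → (∀ p ∈ L, p.1 ∈ N) → Marked F L →
      κ.toFun (L.map (ent ι)) = 0) (n : M) (hn : n ∈ N) (L : List (M × B)) (hL : L.length + 1 < k)
    (hN : ∀ p ∈ L, p.1 ∈ N) : κ.toFun (L.map (ent ι) ++ [n]) ∈ D := by
  have := H.Frep k HZ n hn L [] (by simpa using hL) (by simpa using hN)
  simp only [List.map_nil, List.nil_append] at this
  rw [this]
  refine H.kap_D hED _ _ (Nat.lt_succ_self _) (by simp) ?_
  intro q hq
  rcases List.mem_append.1 hq with hq | hq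
  · obtain ⟨p, hp, rfl⟩ := List.mem_map.1 hq
    exact N.mul_mem (hN p hp) (H.hDN _ (H.hFD _))
  · rw [List.mem_singleton] at hq
    rw [hq]; exact hn

end Ctx

lemma marked_left {A C : List (M × B)} (hC : C ≠ []) {p : M × B} (hp : p ∈ A) (h : F p.2 = 0) :
    Marked F (A ++ C) :=
  ⟨p, by rw [List.dropLast_append_of_ne_nil hC]; simp [hp], h⟩

lemma marked_right {A C : List (M × B)} (h : Marked F C) : Marked F (A ++ C) := by
  obtain ⟨p, hp, h⟩ := h
  have hC : C ≠ [] := by rintro rfl; simp at hp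
  exact ⟨p, by rw [List.dropLast_append_of_ne_nil hC]; simp [hp], h⟩

lemma marked_split {A C : List (M × B)} (hC : C ≠ []) (h : Marked F (A ++ C)) :
    (∃ p ∈ A, F p.2 = 0) ∨ Marked F C := by
  obtain ⟨p, hp, h⟩ := h
  rw [List.dropLast_append_of_ne_nil hC] at hp
  rcases List.mem_append.1 hp with hp | hp
  · exact Or.inl ⟨p, hp, h⟩
  · exact Or.inr ⟨p, hp, h⟩

lemma marked_mid {A C : List (M × B)} {x y : M × B} (h : (∃ p ∈ A, F p.2 = 0) ∨ Marked F (y :: C)) :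
    Marked F (A ++ x :: y :: C) := by
  rcases h with ⟨p, hp, h⟩ | h
  · exact marked_left (by simp) hp h
  · have := marked_right (A := A ++ [x]) h
    simpa using this

namespace Ctx

/-- One entry from `N` in a marked cumulant. -/
lemma Z1 (H : Ctx ι E D F κ N) (hED : ∀ n ∈ N, E n ∈ D) (k : ℕ)
    (HZ : ∀ L : List (M × B), L.length < k → (∀ p ∈ L, p.1 ∈ N) → Marked F L →
      κ.toFun (L.map (ent ι)) = 0) (pre post : List (M × B)) (x : M) (y : M × B)
    (hk : pre.length + post.length + 2 ≤ k) (hx : x ∈ N) (hy : y.1 ∈ N)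
    (hpre : ∀ p ∈ pre, p.1 ∈ N) (hpost : ∀ p ∈ post, p.1 ∈ N)
    (hm : (∃ p ∈ pre, F p.2 = 0) ∨ Marked F (y :: post)) :
    κ.toFun (pre.map (ent ι) ++ x :: ent ι y :: post.map (ent ι)) = 0 := by
  have h := product_formula H.hE1 κ H.hR (pre.map (ent ι)) x (ent ι y) (post.map (ent ι))
  have hL : κ.toFun (pre.map (ent ι) ++ (x * ent ι y) :: post.map (ent ι)) = 0 := by
    have := HZ (pre ++ (x * y.1, y.2) :: post) (by simp; omega) (by
      intro q hq
      simp at hq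
      rcases hq with hq | rfl | hq
      · exact hpre q hq
      · exact N.mul_mem hx hy
      · exact hpost q hq) (by
      rcases hm with ⟨p, hp, hm⟩ | hm
      · exact marked_left (by simp) hp hm
      · apply marked_right
        rcases post with _ | ⟨z, post⟩
        · obtain ⟨p, hp, _⟩ := hm
          simp at hp
        · rw [← List.singleton_append] at hm ⊢
          rcases marked_split (by simp) hm with ⟨p, hp, hmp⟩ | hm
          · rw [List.mem_singleton] at hp
            subst hp
            exact marked_left (p := (x * p.1, p.2)) (by simp) (by simp) hmp
          · exact marked_right hm)
    simpa [ent, mul_assoc] using this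
  have hinN : ∀ p ∈ pre ++ [(x, (1 : B))], p.1 ∈ N := by
    intro q hq
    simp at hq
    rcases hq with hq | rfl
    · exact hpre q hq
    · exact hx
  have hyN : ∀ p ∈ y :: post, p.1 ∈ N := by
    intro q hq
    rcases List.mem_cons.1 hq with rfl | hq
    · exact hy
    · exact hpost q hq
  rw [hL, spl1_eq_zero _ (ent ι y :: post.map (ent ι)), spl1_eq_zero _ (pre.map (ent ι))] at h
  · simpa using h.symm
  · -- left terms
    intro p1 p2 h1 h2
    rw [List.nil_append] at h2
    obtain ⟨k1, k2, hk12, rfl, rfl⟩ := List.map_eq_append_iff.1 h2.symm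
    rcases List.eq_nil_or_concat k1 with rfl | ⟨k1, z, rfl⟩
    · simp at h1
    rw [List.concat_eq_append] at *
    subst hk12
    simp at hk
    have e : ∀ c : B, κ.toFun ((k1 ++ [z]).map (ent ι) ++ (ι c * ent ι y) :: post.map (ent ι)) =
        κ.toFun ((k1 ++ (z.1, z.2 * c) :: y :: post).map (ent ι)) := by
      intro c
      simp only [List.map_append, List.map_cons, List.map_nil, List.append_assoc, List.cons_append,
        List.nil_append]
      rw [← κ.B_mid]
      simp [ent, mul_assoc]
    have hcD : κ.toFun (k2.map (ent ι) ++ [x]) ∈ D :=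
      H.Dm hED k HZ x hx k2 (by omega) (fun p hp => hpre p (by simp [hp]))
    have hmark : ((∃ p ∈ k1 ++ [z], F p.2 = 0) ∨ Marked F (y :: post)) →
        κ.toFun ((k1 ++ [z]).map (ent ι) ++
          (ι (κ.toFun (k2.map (ent ι) ++ [x])) * ent ι y) :: post.map (ent ι)) = 0 := by
      intro hm
      rw [e]
      apply HZ _ (by simp; omega)
      · intro q hq
        simp at hq
        rcases hq with hq | rfl | rfl | hq
        · exact hpre q (by simp [hq])
        · exact hpre z (by simp)
        · exact hy
        · exact hpost q hq
      · rcases hm with ⟨p, hp, hmp⟩ | hm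
        · rcases List.mem_append.1 hp with hp | hp
          · exact marked_left (by simp) hp hmp
          · rw [List.mem_singleton] at hp
            subst hp
            have := marked_left (F := F) (A := k1 ++ [(p.1, p.2 * κ.toFun (k2.map (ent ι) ++ [x]))])
              (C := y :: post) (p := (p.1, p.2 * κ.toFun (k2.map (ent ι) ++ [x])))
              (by simp) (by simp) (by simp only; rw [H.Fr hcD, hmp, zero_mul])
            simpa using this
        · exact marked_mid (Or.inr hm)
    rcases hm with ⟨p, hp, hm⟩ | hm
    · rcases List.mem_append.1 hp with hp | hp
      · exact hmark (Or.inl ⟨p, hp, hm⟩)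
      · have h0 : κ.toFun (k2.map (ent ι) ++ [x]) = 0 := by
          have := HZ (k2 ++ [(x, 1)]) (by simp; omega)
            (fun q hq => hinN q (by simp at hq ⊢; tauto)) (marked_left (by simp) hp hm)
          simpa [ent] using this
        rw [h0, map_zero, zero_mul, kap_zero]
    · exact hmark (Or.inr hm)
  · -- right terms
    intro q1 q2 h1 h2
    rw [List.nil_append, ← List.map_cons] at h2
    obtain ⟨l1, l2, hl, rfl, rfl⟩ := List.map_eq_append_iff.1 h2.symm
    simp at h1
    have hlen := congrArg List.length hl
    simp at hlen
    have hl1N : ∀ p ∈ l1, p.1 ∈ N := fun p hp => hyN p (by rw [hl]; simp [hp])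
    have hl2N : ∀ p ∈ l2, p.1 ∈ N := fun p hp => hyN p (by rw [hl]; simp [hp])
    by_cases hl2 : l2 = []
    · subst hl2
      rw [List.map_nil, κ.B_right]
      rcases hm with ⟨p, hp, hm⟩ | hm
      · have := HZ (pre ++ [(x, 1)]) (by simp; omega) hinN (marked_left (by simp) hp hm)
        have h0 : κ.toFun (pre.map (ent ι) ++ [x]) = 0 := by simpa [ent] using this
        rw [h0, zero_mul]
      · rw [HZ l1 (by simp at hlen; omega) hl1N (by rw [hl, List.append_nil] at hm; exact hm),
          mul_zero]
    · have hpos := List.length_pos_of_ne_nil hl2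
      have hmark : Marked F (pre ++ (x, κ.toFun (l1.map (ent ι))) :: l2) →
          κ.toFun (pre.map (ent ι) ++ (x * ι (κ.toFun (l1.map (ent ι)))) :: l2.map (ent ι)) = 0 := by
        intro hm
        have := HZ _ (by simp; omega) (by
          intro q hq
          simp at hq
          rcases hq with hq | rfl | hq
          · exact hpre q hq
          · exact hx
          · exact hl2N q hq) hm
        simpa [ent] using this
      rcases hm with ⟨p, hp, hm⟩ | hm
      · exact hmark (marked_left (by simp) hp hm)
      · rw [hl] at hm
        rcases marked_split hl2 hm with ⟨p, hp, hmp⟩ | hm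
        · rcases List.eq_nil_or_concat l1 with rfl | ⟨l1, z, rfl⟩
          · simp at hp
          rw [List.concat_eq_append] at *
          simp at hlen
          rcases List.mem_append.1 hp with hp | hp
          · rw [HZ (l1 ++ [z]) (by simp; omega) hl1N (marked_left (by simp) hp hmp), map_zero,
              mul_zero, kap_zero]
          · rw [List.mem_singleton] at hp
            subst hp
            have hd := H.Dm hED k HZ p.1 (hl1N p (by simp)) l1 (by omega)
              (fun q hq => hl1N q (by simp [hq]))
            have e : κ.toFun ((l1 ++ [p]).map (ent ι)) = κ.toFun (l1.map (ent ι) ++ [p.1]) * p.2 := by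
              rw [← κ.B_right]; simp [ent]
            apply hmark
            have := marked_left (F := F) (A := pre ++ [(x, κ.toFun ((l1 ++ [p]).map (ent ι)))])
              (C := l2) (p := (x, κ.toFun ((l1 ++ [p]).map (ent ι)))) hl2 (by simp)
              (by simp only; rw [e, H.Fl hd, hmp, mul_zero])
            simpa using this
        · apply hmark
          have := marked_right (A := pre ++ [(x, κ.toFun (l1.map (ent ι)))]) hm
          simpa using this

lemma Zmain (H : Ctx ι E D F κ N) (hED : ∀ n ∈ N, E n ∈ D)
    (hcen : ∀ L : List (M × B), L ≠ [] → Cen E F N L → E (L.map (ent ι)).prod = 0) (k : ℕ)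
    (HZ : ∀ L : List (M × B), L.length < k → (∀ p ∈ L, p.1 ∈ N) → Marked F L →
      κ.toFun (L.map (ent ι)) = 0) : ∀ (todo don : List (M × B)),
      don.length + todo.length ≤ k → (∀ p ∈ don, p.1 ∈ N ∧ F (E p.1) = 0 ∧ F p.2 = 0) →
      (∀ p ∈ todo, p.1 ∈ N) → todo ≠ [] → (don ≠ [] ∨ Marked F todo) →
      κ.toFun (don.map (ent ι) ++ todo.map (ent ι)) = 0 := by
  have hc0 : ∀ n ∈ N, (n - ι (E n)) ∈ N ∧ E (n - ι (E n)) = 0 := fun n hn =>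
    ⟨N.sub_mem hn (H.hDN _ (hED n hn)), by simp [H.Ei]⟩
  intro todo
  induction todo with
  | nil => intro don _ _ _ h; exact absurd rfl h
  | cons p t ih =>
    intro don hk hdon htodo _ hm
    have hp := htodo p (by simp)
    obtain ⟨c1, c2⟩ := hc0 p.1 hp
    rcases t with _ | ⟨y, t⟩
    · have hd : don ≠ [] := by
        rcases hm with h | ⟨q, hq, _⟩
        · exact h
        · simp at hq
      have h1 : κ.toFun (don.map (ent ι) ++ [p.1 - ι (E p.1)]) = 0 := by
        have hcc : Cen E F N (don ++ [(p.1 - ι (E p.1), 1)]) := by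
          refine ⟨?_, ?_⟩
          · intro q hq
            rcases List.mem_append.1 hq with hq | hq
            · exact ⟨(hdon q hq).1, (hdon q hq).2.1⟩
            · rw [List.mem_singleton] at hq
              subst hq
              exact ⟨c1, by simp only; rw [c2, map_zero]⟩
          · rw [List.dropLast_concat]
            intro q hq
            exact (hdon q hq).2.2
        have h2 := H.cen_E _ (by simp) hcc (fun s hs _ hsc => hcen s hs hsc)
        rw [hcen _ (by simp) hcc] at h2
        simpa [ent] using h2.symm
      have h2 := H.vanish (don.map (ent ι)) [] (E p.1) (by simpa using hd)
      simp only [List.map_cons, List.map_nil, ent]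
      rw [κ.B_right]
      rw [kap_sub, h2, sub_zero] at h1
      exact (by rw [h1, zero_mul] : κ.toFun (don.map (ent ι) ++ [p.1]) * p.2 = 0)
    · simp at hk
      have e : ent ι p = (ent ι (p.1 - ι (E p.1), p.2 - F p.2) + ι (E p.1 * (p.2 - F p.2)))
          + p.1 * ι (F p.2) := by
        simp only [ent, _root_.map_sub, _root_.map_mul]
        noncomm_ring
      have h1 := ih (don ++ [(p.1 - ι (E p.1), p.2 - F p.2)]) (by simp; omega) (by
        intro q hq
        rcases List.mem_append.1 hq with hq | hq
        · exact hdon q hq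
        · rw [List.mem_singleton] at hq
          subst hq
          exact ⟨c1, by simp only; rw [c2, map_zero], by simp [H.FF]⟩)
        (fun q hq => htodo q (by simp at hq ⊢; tauto)) (by simp) (Or.inl (by simp))
      have h2 := H.vanish (don.map (ent ι)) ((y :: t).map (ent ι)) (E p.1 * (p.2 - F p.2)) (by simp)
      have h3 : κ.toFun (don.map (ent ι) ++ (p.1 * ι (F p.2)) :: ent ι y :: t.map (ent ι)) = 0 := by
        have hz : ((∃ p ∈ don, F p.2 = 0) ∨ Marked F (y :: t)) →
            κ.toFun (don.map (ent ι) ++ (p.1 * ι (F p.2)) :: ent ι y :: t.map (ent ι)) = 0 := by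
          intro hm
          exact H.Z1 hED k HZ don t _ y (by omega) (N.mul_mem hp (H.hDN _ (H.hFD _)))
            (htodo y (by simp)) (fun q hq => (hdon q hq).1) (fun q hq => htodo q (by simp [hq])) hm
        rcases hm with hd | hm
        · obtain ⟨q, hq⟩ := List.exists_mem_of_ne_nil _ hd
          exact hz (Or.inl ⟨q, hq, (hdon q hq).2.2⟩)
        · rw [← List.singleton_append] at hm
          rcases marked_split (by simp) hm with ⟨q, hq, hmq⟩ | hm
          · rw [List.mem_singleton] at hq
            subst hq
            rw [hmq, map_zero, mul_zero, kap_zero]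
          · exact hz (Or.inr hm)
      simp only [List.map_append, List.map_cons, List.map_nil, List.append_assoc, List.cons_append,
        List.nil_append] at h1 h2 ⊢
      rw [e, κ.map_add, κ.map_add, h1, h2, h3]
      simp

lemma Zall (H : Ctx ι E D F κ N) (hED : ∀ n ∈ N, E n ∈ D)
    (hcen : ∀ L : List (M × B), L ≠ [] → Cen E F N L → E (L.map (ent ι)).prod = 0) :
    ∀ (k : ℕ) (L : List (M × B)), L.length < k → (∀ p ∈ L, p.1 ∈ N) → Marked F L →
      κ.toFun (L.map (ent ι)) = 0 := by
  intro k
  induction k with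
  | zero => intro L h; omega
  | succ k IH =>
    intro L hk hN hm
    have hL : L ≠ [] := by
      rintro rfl
      obtain ⟨q, hq, _⟩ := hm
      simp at hq
    have := H.Zmain hED hcen k IH L [] (by simp; omega) (by simp) hN hL (Or.inr hm)
    simpa using this

lemma C_of_cen (H : Ctx ι E D F κ N)
    (hcen : ∀ L : List (M × B), L ≠ [] → Cen E F N L → E (L.map (ent ι)).prod = 0)
    (L : List (M × B)) (hL : ∀ p ∈ L, p.1 ∈ N) (n : M) (hn : n ∈ N) :
      κ.toFun (L.map (ent ι) ++ [n]) =
        F (κ.toFun (L.map (fun p => p.1 * ι (F p.2)) ++ [n])) := by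
  have hED : ∀ n ∈ N, E n ∈ D := by
    intro n hn
    have := hcen [(n - ι (F (E n)), 1)] (by simp) ⟨by
      intro q hq
      rw [List.mem_singleton] at hq
      subst hq
      exact ⟨N.sub_mem hn (H.hDN _ (H.hFD _)), by simp [H.Ei, H.FF]⟩, by simp⟩
    simp [ent, H.Ei, sub_eq_zero] at this
    rw [this]
    exact H.hFD _
  have hZ := H.Zall hED hcen (L.length + 2)
  have h1 := H.Frep _ hZ n hn L [] (by simp) (by simpa using hL)
  have h2 := H.Dm hED _ hZ n hn L (by omega) hL
  simp only [List.map_nil, List.nil_append] at h1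
  rw [← h1, H.hFid _ h2]

end Ctx

end Main2

end OVFree


/-- Let `(M, E : M → B)` be a `B`-probability space (with `ι : B → M` the
inclusion of `B` as a unital subalgebra), `D ⊆ B` a unital subalgebra and `F : B → D` a
conditional expectation satisfying the faithfulness condition (`F(b₁ b₂) = 0` for all `b₂`
implies `b₁ = 0`).  Let `κ = {⋯}_E` be the `B`-valued cumulant map, and let `N ⊆ M` be a
subalgebra containing `D`.  Then `N` is free from `B` with amalgamation over `D` (with
respect to `F∘E`) iff
`{n₁ b₁, n₂ b₂, …, n_{k−1} b_{k−1}, n_k}_E = F({n₁ F(b₁), …, n_{k−1} F(b_{k−1}), n_k}_E)`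
for all `k ≥ 1`, all `n₁, …, n_k ∈ N` and all `b₁, …, b_{k−1} ∈ B`. -/
theorem subalgebra_free_iff_R_transform_factorization
    {B M : Type*} [Ring B] [Algebra ℂ B] [Ring M] [Algebra ℂ M]
    (ι : B →ₐ[ℂ] M) (hι : Function.Injective ι)
    (E : M →ₗ[ℂ] B) (hE : IsCondExp ι E)
    (D : Subalgebra ℂ B)
    (F : B →ₗ[ℂ] B) (hFD : ∀ b, F b ∈ D) (hFid : ∀ d ∈ D, F d = d)
    (hFbimod : ∀ d ∈ D, ∀ d' ∈ D, ∀ b : B, F (d * b * d') = d * F b * d')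
    (hFfaithful : ∀ b₁ : B, (∀ b₂ : B, F (b₁ * b₂) = 0) → b₁ = 0)
    (κ : MultiplicativeMap ι) (hκ : IsCumulantMap ι E κ)
    (N : Subalgebra ℂ M) (hDN : ∀ d ∈ D, ι d ∈ N) :
    FreeWithAmalgamation (fun m => F (E m)) N ι.range
      ↔ ∀ (k : ℕ) (nn : Fin (k + 1) → M), (∀ j, nn j ∈ N) → ∀ b : Fin k → B,
          κ.toFun (((List.finRange k).map fun j => nn j.castSucc * ι (b j))
              ++ [nn (Fin.last k)])
            = F (κ.toFun (((List.finRange k).map fun j => nn j.castSucc * ι (F (b j)))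
              ++ [nn (Fin.last k)])) := by
  have H : Ctx ι E D F κ N :=
    { hE1 := hE.1, hEb := hE.2, hFD := hFD, hFid := hFid, hFb := hFbimod,
      hR := left_rec hE.1 κ hκ, hDN := hDN }
  constructor
  · intro hfree k nn hnn b
    have hC := H.C_of_cen (H.cen_of_free hFfaithful hfree)
      ((List.finRange k).map fun j => (nn j.castSucc, b j)) (by
        intro p hp
        obtain ⟨j, _, rfl⟩ := List.mem_map.1 hp
        exact hnn _) (nn (Fin.last k)) (hnn _)
    simpa [List.map_map, Function.comp_def, ent] using hC
  · intro hC
    refine H.free_of_cen fun L hL hc => H.cen_of_C ?_ (L.length + 1) L (by omega) hL hc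
    intro L hL n hn
    have h := hC L.length (Fin.snoc (fun j : Fin L.length => (L.get j).1) n) (by
      intro j
      refine Fin.lastCases ?_ (fun j => ?_) j
      · simpa using hn
      · simpa using hL _ (List.get_mem L j)) (fun j => (L.get j).2)
    simp only [Fin.snoc_castSucc, Fin.snoc_last] at h
    have e : ∀ f : M × B → M, (List.finRange L.length).map (fun j => f (L.get j)) = L.map f := by
      intro f
      apply List.ext_getElem <;> simp
    have e1 := e (ent ι)
    have e2 := e (fun p => p.1 * ι (F p.2))
    simp only [ent] at e1
    rw [e1, e2] at h
    exact h
end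
end

section
/- Let B be a unital complex algebra, (M, E : M → B) a B-probability space, D ⊆ B a unital subalgebra, and F : B → D a conditional expectation. Let X₁, …, Xₙ ∈ M and assume that the B-valued cumulants of X₁, …, Xₙ satisfy k^{X₁,…,Xₙ}_{B; i₁,…,i_k}(d₁, …, d_{k−1}) ∈ D for all k ≥ 1, all indices i₁, …, i_k ∈ {1, …, n} and all d₁, …, d_{k−1} ∈ D. Then the D-valued cumulants of X₁, …, Xₙ, computed in the D-probability space (M, F∘E), are given by the restrictions of the B-valued cumulants: k^{X₁,…,Xₙ}_{D; i₁,…,i_k}(d₁, …, d_{k−1}) = k^{X₁,…,Xₙ}_{B; i₁,…,i_k}(d₁, …, d_{k−1}) for all d₁, …, d_{k−1} ∈ D. -/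
open scoped Classical

noncomputable section

open OVFree

namespace OVFree

section Helpers

variable {B M : Type*} [Ring B] [Algebra ℂ B] [Ring M] [Algebra ℂ M]

theorem step_rel (ι : B →ₐ[ℂ] M) (D : Subalgebra ℂ B) (κ : List M → B) (κD : List M → ↥D)
    (Good : M → Prop) (hG : ∀ x (d : ↥D), Good x → Good (x * ι d))
    {n : ℕ} (P : Finset (Finset (Fin n))) (m : Fin n → M) (hm : ∀ i, Good (m i)) (i : Fin n)
    (st : List (List M)) (bD : ↥D) (c : ℕ)
    (hgood : ∀ ts ∈ st, ∀ x ∈ ts, Good x) (hlen : (st.map List.length).sum ≤ c)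
    (hκ : ∀ l : List M, l ≠ [] → (∀ x ∈ l, Good x) → l.length ≤ c + 1 → (κD l : B) = κ l) :
    ∃ (st' : List (List M)) (bD' : ↥D),
      bracketingStep κ ι P m (st, (bD : B)) i = (st', (bD' : B)) ∧
      bracketingStep κD (ι.comp D.val) P m (st, bD) i = (st', bD') ∧
      (∀ ts ∈ st', ∀ x ∈ ts, Good x) ∧ (st'.map List.length).sum ≤ c + 1 ∧
      (IsBlockMax P i → (st'.map List.length).sum ≤ c) := by
  unfold bracketingStep
  dsimp only
  obtain ⟨st₁, h₁⟩ : ∃ st₁, st₁ = if IsBlockMin P i then [] :: st else st := ⟨_, rfl⟩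
  rw [← h₁]
  have hgood₁ : ∀ ts ∈ st₁, ∀ x ∈ ts, Good x := by
    rw [h₁]; split_ifs
    · intro ts hts
      rcases List.mem_cons.1 hts with rfl | h
      · simp
      · exact hgood ts h
    · exact hgood
  have hlen₁ : (st₁.map List.length).sum ≤ c := by
    rw [h₁]; split_ifs
    · simpa using hlen
    · exact hlen
  clear h₁ hgood hlen
  rcases st₁ with _ | ⟨ts, rest⟩
  · by_cases hM : IsBlockMax P i
    · exact ⟨[], bD, by simp [hM], by simp [hM], by simp, by simp, by simp⟩
    · exact ⟨[], bD, by simp [hM], by simp [hM], by simp, by simp, by simp⟩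
  · simp only [List.map_cons, List.sum_cons] at hlen₁
    have hts : ∀ x ∈ m i :: ts, Good x := by
      intro x hx
      rcases List.mem_cons.1 hx with rfl | h
      · exact hm i
      · exact hgood₁ ts (by simp) x h
    have hrest : ∀ us ∈ rest, ∀ x ∈ us, Good x := fun us hus =>
      hgood₁ us (List.mem_cons_of_mem _ hus)
    by_cases hM : IsBlockMax P i
    · have hk : (κD (m i :: ts).reverse : B) = κ (m i :: ts).reverse := by
        apply hκ
        · simp
        · intro x hx; exact hts x (List.mem_reverse.1 hx)
        · simp only [List.length_reverse, List.length_cons]; omega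
      rcases rest with _ | ⟨us, rest'⟩
      · refine ⟨[], bD * κD (m i :: ts).reverse, ?_, ?_, by simp, by simp, by simp⟩
        · simp only [hM, if_true, ← hk]; rfl
        · simp only [hM, if_true]
      · refine ⟨closeArg ι (κD (m i :: ts).reverse : B) us :: rest', bD, ?_, ?_, ?_, ?_, ?_⟩
        · simp only [hM, if_true, ← hk]
        · simp only [hM, if_true]
          cases us <;> rfl
        · intro vs hvs
          rcases List.mem_cons.1 hvs with rfl | h
          · have hus := hrest us (by simp)
            cases us with
            | nil => simp [closeArg]
            | cons a t =>
              intro x hx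
              rcases List.mem_cons.1 hx with rfl | h
              · exact hG _ _ (hus a (by simp))
              · exact hus x (by simp [h])
          · exact hrest vs (by simp [h])
        all_goals
          have : (closeArg ι (κD (m i :: ts).reverse : B) us).length = us.length := by
            cases us <;> rfl
          simp only [List.map_cons, List.sum_cons, this] at hlen₁ ⊢
          omega
    · refine ⟨(m i :: ts) :: rest, bD, by simp [hM], by simp [hM], ?_, ?_, fun h => absurd h hM⟩
      · intro vs hvs
        rcases List.mem_cons.1 hvs with rfl | h
        · exact hts
        · exact hrest vs h
      · simp only [List.map_cons, List.sum_cons, List.length_cons]; omega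

theorem take_finRange_succ {n j : ℕ} (h : j < n) :
    (List.finRange n).take (j + 1) = (List.finRange n).take j ++ [⟨j, h⟩] := by
  rw [List.take_succ_eq_append_getElem (by simpa using h)]
  simp

theorem eq_univ_of_max {k : ℕ} {P : Finset (Finset (Fin (k + 1)))} (hP : IsPartition P)
    (h : ∀ i : Fin (k + 1), i.val < k → ¬ IsBlockMax P i) : P = {Finset.univ} := by
  have hlast : ∀ t ∈ P, Fin.last k ∈ t := by
    intro t ht
    have hne := hP.1 t ht
    have hmem := t.max'_mem hne
    by_cases hk : (t.max' hne).val < k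
    · exfalso
      apply h _ hk
      intro u hu hmu j hj
      have : u = t := (hP.2 (t.max' hne)).unique ⟨hu, hmu⟩ ⟨ht, hmem⟩
      subst this
      exact Finset.le_max' _ _ hj
    · have : t.max' hne = Fin.last k := by
        apply Fin.ext; simp only [Fin.val_last]; omega
      rwa [← this]
  obtain ⟨t, ⟨ht, -⟩, -⟩ := hP.2 (Fin.last k)
  have hall : ∀ u ∈ P, u = t := fun u hu =>
    (hP.2 (Fin.last k)).unique ⟨hu, hlast u hu⟩ ⟨ht, hlast t ht⟩
  have htu : t = Finset.univ := by
    ext i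
    obtain ⟨u, ⟨hu, hi⟩, -⟩ := hP.2 i
    rw [hall u hu] at hi
    simp [hi]
  subst htu
  ext u
  simp only [Finset.mem_singleton]
  exact ⟨hall u, fun h => h ▸ ht⟩

theorem bracketing_rel (ι : B →ₐ[ℂ] M) (D : Subalgebra ℂ B) (κ : List M → B) (κD : List M → ↥D)
    (Good : M → Prop) (hG : ∀ x (d : ↥D), Good x → Good (x * ι d))
    {k : ℕ} (P : Finset (Finset (Fin (k + 1)))) (hP : IsPartition P) (hPu : P ≠ {Finset.univ})
    (m : Fin (k + 1) → M) (hm : ∀ i, Good (m i))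
    (hκ : ∀ l : List M, l ≠ [] → (∀ x ∈ l, Good x) → l.length ≤ k → (κD l : B) = κ l) :
    ((bracketing κD (ι.comp D.val) P m : ↥D) : B) = bracketing κ ι P m := by
  have key : ∀ j : ℕ, j ≤ k + 1 → ∃ (st : List (List M)) (bD : ↥D),
      ((List.finRange (k + 1)).take j).foldl (bracketingStep κ ι P m) ([], 1) = (st, (bD : B)) ∧
      ((List.finRange (k + 1)).take j).foldl (bracketingStep κD (ι.comp D.val) P m) ([], 1)
        = (st, bD) ∧
      (∀ ts ∈ st, ∀ x ∈ ts, Good x) ∧ (st.map List.length).sum ≤ j ∧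
      ((∃ i : Fin (k + 1), i.val < j ∧ IsBlockMax P i) → (st.map List.length).sum + 1 ≤ j) := by
    intro j
    induction j with
    | zero => intro _; exact ⟨[], 1, by simp, by simp, by simp, by simp, by simp⟩
    | succ j ih =>
      intro hj
      obtain ⟨st, bD, h1, h2, h3, h4, h5⟩ := ih (by omega)
      rw [take_finRange_succ (show j < k + 1 by omega), List.foldl_append, List.foldl_append,
        h1, h2]
      simp only [List.foldl_cons, List.foldl_nil]
      by_cases hex : ∃ i : Fin (k + 1), i.val < j ∧ IsBlockMax P i
      · have h5' := h5 hex
        obtain ⟨st', bD', g1, g2, g3, g4, g5⟩ := step_rel ι D κ κD Good hG P m hm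
          ⟨j, by omega⟩ st bD (j - 1) h3 (by omega)
          (fun l a b c => hκ l a b (by omega))
        exact ⟨st', bD', g1, g2, g3, by omega, fun _ => by omega⟩
      · have hjk : j < k := by
          by_contra hcon
          apply hPu
          apply eq_univ_of_max hP
          intro i hi hmax
          exact hex ⟨i, by omega, hmax⟩
        obtain ⟨st', bD', g1, g2, g3, g4, g5⟩ := step_rel ι D κ κD Good hG P m hm
          ⟨j, by omega⟩ st bD j h3 h4
          (fun l a b c => hκ l a b (by omega))
        refine ⟨st', bD', g1, g2, g3, g4, ?_⟩
        rintro ⟨i, hi, hmax⟩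
        have : i = ⟨j, by omega⟩ := by
          apply Fin.ext
          by_contra hne
          exact hex ⟨i, by simp only at hne; omega, hmax⟩
        have := g5 (this ▸ hmax)
        omega
  obtain ⟨st, bD, h1, h2, -⟩ := key (k + 1) le_rfl
  rw [List.take_of_length_le (by simp)] at h1 h2
  unfold bracketing
  rw [h1, h2]

theorem isBlockMin_univ {k : ℕ} (i : Fin (k + 1)) :
    IsBlockMin {Finset.univ} i ↔ i.val = 0 := by
  constructor
  · intro h
    have := h Finset.univ (by simp) (by simp) 0 (by simp)
    simpa using this
  · intro h t _ _ j _
    rw [Fin.le_def]; omega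

theorem isBlockMax_univ {k : ℕ} (i : Fin (k + 1)) :
    IsBlockMax {Finset.univ} i ↔ i.val = k := by
  constructor
  · intro h
    have := h Finset.univ (by simp) (by simp) (Fin.last k) (by simp)
    rw [Fin.le_def, Fin.val_last] at this; omega
  · intro h t _ _ j _
    rw [Fin.le_def]; omega

theorem bracketing_univ (ι : B →ₐ[ℂ] M) (κ : List M → B) {k : ℕ} (m : Fin (k + 1) → M) :
    bracketing κ ι {Finset.univ} m = κ ((List.finRange (k + 1)).map m) := by
  have key : ∀ j : ℕ, j ≤ k →
      ((List.finRange (k + 1)).take j).foldl (bracketingStep κ ι {Finset.univ} m) ([], 1)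
        = (if j = 0 then [] else [(((List.finRange (k + 1)).take j).map m).reverse], 1) := by
    intro j
    induction j with
    | zero => intro _; simp
    | succ j ih =>
      intro hj
      rw [take_finRange_succ (show j < k + 1 by omega), List.foldl_append, ih (by omega)]
      simp only [List.foldl_cons, List.foldl_nil, bracketingStep, isBlockMin_univ,
        isBlockMax_univ]
      have hjk : j ≠ k := by omega
      by_cases h0 : j = 0
      · subst h0; simp [hjk]
      · simp [hjk, h0]
  have hfin := take_finRange_succ (show k < k + 1 by omega)
  rw [List.take_of_length_le (by simp)] at hfin
  unfold bracketing
  rw [hfin, List.foldl_append, key k le_rfl]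
  simp only [List.foldl_cons, List.foldl_nil, bracketingStep, isBlockMin_univ,
        isBlockMax_univ]
  by_cases h0 : k = 0
  · subst h0; simp
  · simp [h0]

theorem univ_mem_NC (k : ℕ) : ({Finset.univ} : Finset (Finset (Fin (k + 1)))) ∈ NC (k + 1) := by
  unfold NC
  simp only [Finset.mem_filter, Finset.mem_univ, true_and]
  refine ⟨⟨?_, ?_⟩, ?_⟩
  · intro t ht
    rw [Finset.mem_singleton.1 ht]
    exact Finset.univ_nonempty
  · intro i
    exact ⟨Finset.univ, by simp, fun y hy => Finset.mem_singleton.1 hy.1⟩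
  · intro a b c d _ _ _ t ht u hu _ _ _ _
    rw [Finset.mem_singleton.1 ht, Finset.mem_singleton.1 hu]

end Helpers

end OVFree

/-- Let `(M, E : M → B)` be a `B`-probability space (with `ι : B → M` the
inclusion of `B` as a unital subalgebra), `D ⊆ B` a unital subalgebra and `F : B → D` a
conditional expectation, so that `(M, F∘E)` is a `D`-probability space (`ED` is `F∘E`,
viewed as a map into `D`).  Let `κ` be the `B`-valued and `κD` the `D`-valued cumulant map.
If the `B`-valued cumulants of `X₁, …, X_N` satisfy
`k_{B;i₁,…,i_k}(d₁, …, d_{k−1}) ∈ D` for all `d₁, …, d_{k−1} ∈ D`, then the `D`-valued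
cumulants of `X₁, …, X_N` are the restrictions of the `B`-valued ones:
`k_{D;i₁,…,i_k}(d₁, …, d_{k−1}) = k_{B;i₁,…,i_k}(d₁, …, d_{k−1})` for all `dⱼ ∈ D`. -/
theorem cumulants_restrict_to_subalgebra
    {B M : Type*} [Ring B] [Algebra ℂ B] [Ring M] [Algebra ℂ M]
    (ι : B →ₐ[ℂ] M) (hι : Function.Injective ι)
    (E : M →ₗ[ℂ] B) (hE : IsCondExp ι E)
    (D : Subalgebra ℂ B)
    (F : B →ₗ[ℂ] B) (hFD : ∀ b, F b ∈ D) (hFid : ∀ d ∈ D, F d = d)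
    (hFbimod : ∀ d ∈ D, ∀ d' ∈ D, ∀ b : B, F (d * b * d') = d * F b * d')
    (ED : M →ₗ[ℂ] ↥D) (hED : ∀ m : M, (ED m : B) = F (E m))
    (κ : MultiplicativeMap ι) (hκ : IsCumulantMap ι E κ)
    (κD : MultiplicativeMap (ι.comp D.val)) (hκD : IsCumulantMap (ι.comp D.val) ED κD)
    {N : ℕ} (X : Fin N → M)
    (hrestr : ∀ (k : ℕ) (i : Fin (k + 1) → Fin N) (d : Fin k → ↥D),
      cumulantSeries κ X i (fun j => (d j : B)) ∈ D) :
    ∀ (k : ℕ) (i : Fin (k + 1) → Fin N) (d : Fin k → ↥D),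
      ((cumulantSeries κD X i d : ↥D) : B) = cumulantSeries κ X i (fun j => (d j : B)) := by
  obtain ⟨Good, hGood⟩ : ∃ Good : M → Prop, ∀ x, Good x ↔ ∃ (i : Fin N) (d : ↥D), x = X i * ι d :=
    ⟨_, fun _ => Iff.rfl⟩
  have hG : ∀ x (d : ↥D), Good x → Good (x * ι d) := by
    intro x d hx
    obtain ⟨i, d', rfl⟩ := (hGood x).1 hx
    exact (hGood _).2 ⟨i, d' * d, by simp [mul_assoc]⟩
  have hD : ∀ l : List M, l ≠ [] → (∀ x ∈ l, Good x) → κ.toFun l ∈ D := by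
    intro l hl hgl
    obtain ⟨pre, x, rfl⟩ : ∃ pre x, l = pre ++ [x] :=
      ⟨l.dropLast, l.getLast hl, (List.dropLast_append_getLast hl).symm⟩
    obtain ⟨i, d, rfl⟩ := (hGood x).1 (hgl x (by simp))
    have hp : ∀ j : Fin pre.length, ∃ (i : Fin N) (d : ↥D), pre.get j = X i * ι d :=
      fun j => (hGood _).1 (hgl _ (List.mem_append_left _ (List.get_mem _ _)))
    choose f g hfg using hp
    rw [κ.B_right]
    refine D.mul_mem ?_ d.2
    have := hrestr pre.length (Fin.snoc f i) g
    unfold cumulantSeries at this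
    simp only [Fin.snoc_castSucc, Fin.snoc_last] at this
    simp only [← hfg] at this
    rwa [List.map_get_finRange] at this
  have main : ∀ n : ℕ, ∀ l : List M, l ≠ [] → (∀ x ∈ l, Good x) → l.length ≤ n →
      (κD.toFun l : B) = κ.toFun l := by
    intro n
    induction n with
    | zero =>
      intro l hl _ hlen
      exact absurd (List.length_eq_zero_iff.1 (Nat.le_zero.1 hlen)) hl
    | succ k ih =>
      intro l hl hgl hlen
      by_cases hlk : l.length ≤ k
      · exact ih l hl hgl hlk
      have hlk' : l.length = k + 1 := by omega
      obtain ⟨m, rfl⟩ : ∃ m : Fin (k + 1) → M, l = (List.finRange (k + 1)).map m := by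
        rw [← hlk']
        exact ⟨l.get, (List.map_get_finRange l).symm⟩
      have hm : ∀ i, Good (m i) := fun i => hgl _ (List.mem_map.2 ⟨i, by simp, rfl⟩)
      have e1 := hκ (k + 1) m (Nat.succ_pos k)
      have e2 := hκD (k + 1) m (Nat.succ_pos k)
      have e3 := hED ((List.finRange (k + 1)).map m).prod
      rw [e1, e2, ← Finset.add_sum_erase _ _ (univ_mem_NC k),
        ← Finset.add_sum_erase _ _ (univ_mem_NC k), bracketing_univ, bracketing_univ, map_add,
        map_sum, hFid _ (hD _ hl hgl)] at e3
      push_cast at e3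
      have hsum : ∑ P ∈ (NC (k + 1)).erase {Finset.univ},
            ((bracketing κD.toFun (ι.comp D.val) P m : ↥D) : B)
          = ∑ P ∈ (NC (k + 1)).erase {Finset.univ}, F (bracketing κ.toFun ι P m) := by
        apply Finset.sum_congr rfl
        intro P hP
        obtain ⟨hne, hNC⟩ := Finset.mem_erase.1 hP
        have hpart : IsPartition P := by
          unfold NC at hNC
          exact (Finset.mem_filter.1 hNC).2.1
        rw [← bracketing_rel ι D κ.toFun κD.toFun Good hG P hpart hne m hm ih]
        exact (hFid _ (Subtype.property _)).symm
      rw [hsum] at e3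
      exact add_right_cancel e3
  intro k i d
  unfold cumulantSeries
  apply main _ _ (by simp) _ le_rfl
  intro x hx
  rcases List.mem_append.1 hx with h | h
  · obtain ⟨j, -, rfl⟩ := List.mem_map.1 h
    exact (hGood _).2 ⟨_, d j, rfl⟩
  · rw [List.mem_singleton.1 h]
    exact (hGood _).2 ⟨i (Fin.last k), 1, by simp⟩
end
end

section
/- Let B be a unital complex algebra, (M, E : M → B) a B-probability space, D ⊆ B a unital subalgebra, and F : B → D a conditional expectation. Let N ⊆ M be a subalgebra containing D, and assume that the B-valued cumulant map restricted to tuples from N is valued in D, i.e. {m₁, …, m_p}_E ∈ D for all p ≥ 1 and all m₁, …, m_p ∈ N. Then the D-valued cumulant map of the D-probability space (M, F∘E) agrees on such tuples with the B-valued one: {m₁, …, m_p}_{F∘E} = {m₁, …, m_p}_E for all p ≥ 1 and all m₁, …, m_p ∈ N. -/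
open scoped Classical

noncomputable section

open OVFree

theorem aux_take_succ {n k : ℕ} (hk : k < n) :
    (List.finRange n).take (k + 1) = (List.finRange n).take k ++ [⟨k, hk⟩] := by
  rw [List.take_add_one]
  simp [hk]

/-- The bracketing of the one-block partition. -/
theorem aux_bracketing_univ {B M : Type*} [Ring B] [Algebra ℂ B] [Ring M] [Algebra ℂ M]
    (ι : B →ₐ[ℂ] M) (κ : List M → B) {n : ℕ} (hn : 0 < n) (m : Fin n → M) :
    bracketing κ ι {Finset.univ} m = κ ((List.finRange n).map m) := by
  have hmin : ∀ i : Fin n, IsBlockMin {Finset.univ} i ↔ i.val = 0 := by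
    intro i
    constructor
    · intro h
      have := h Finset.univ (by simp) (by simp) ⟨0, hn⟩ (by simp)
      simpa [Fin.le_def] using this
    · intro h t _ _ j _
      simp [Fin.le_def, h]
  have hmax : ∀ i : Fin n, IsBlockMax {Finset.univ} i ↔ i.val + 1 = n := by
    intro i
    constructor
    · intro h
      have := h Finset.univ (by simp) (by simp) ⟨n - 1, by omega⟩ (by simp)
      simp only [Fin.le_def] at this
      omega
    · intro h t _ _ j _
      simp only [Fin.le_def]
      omega
  have key : ∀ k, k + 1 < n →
      ((List.finRange n).take (k + 1)).foldl (bracketingStep κ ι {Finset.univ} m) ([], 1)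
        = ([(((List.finRange n).take (k + 1)).map m).reverse], 1) := by
    intro k
    induction k with
    | zero =>
      intro hk
      rw [aux_take_succ (by omega)]
      have h1 : ¬ (0 + 1 = n) := by omega
      simp [bracketingStep, hmin, hmax, h1]
    | succ k ih =>
      intro hk
      rw [aux_take_succ (show k + 1 < n by omega), List.foldl_append, ih (by omega)]
      have h1 : ¬ (k + 1 + 1 = n) := by omega
      simp [bracketingStep, hmin, hmax, h1]
  obtain ⟨p, rfl⟩ : ∃ p, n = p + 1 := ⟨n - 1, by omega⟩
  unfold bracketing
  have hfull : List.finRange (p + 1) = (List.finRange (p + 1)).take p ++ [⟨p, by omega⟩] := by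
    rw [← aux_take_succ]
    simp
  rcases p with _ | p
  · rw [hfull, List.take_zero, List.nil_append, List.foldl_cons, List.foldl_nil]
    simp only [bracketingStep, hmin, hmax]
    simp
  · rw [hfull, List.foldl_append, key p (by omega)]
    simp [bracketingStep, hmin, hmax]

/-- Agreement of the evaluation states for the two cumulant maps. -/
def AuxInv {B M : Type*} [Ring B] [Algebra ℂ B] [Ring M] [Algebra ℂ M]
    (D : Subalgebra ℂ B) (N : Subalgebra ℂ M) (j k : ℕ)
    (s : List (List M) × B) (sD : List (List M) × ↥D) : Prop :=
  sD.1 = s.1 ∧ (sD.2 : B) = s.2 ∧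
    ∀ l ∈ s.1, (∀ x ∈ l, x ∈ N) ∧ l.length ≤ k ∧ (j < k → l.length < k)

theorem aux_step {B M : Type*} [Ring B] [Algebra ℂ B] [Ring M] [Algebra ℂ M]
    (ι : B →ₐ[ℂ] M) (D : Subalgebra ℂ B) (N : Subalgebra ℂ M) (hDN : ∀ d ∈ D, ι d ∈ N)
    (κ : List M → B) (κD : List M → ↥D) {n : ℕ}
    (H : ∀ l : List M, l ≠ [] → l.length < n → (∀ x ∈ l, x ∈ N) → (κD l : B) = κ l)
    (P : Finset (Finset (Fin n))) (m : Fin n → M) (hm : ∀ i, m i ∈ N)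
    (j : Fin n) (hj0 : 0 < j.val) (hj : IsBlockMin P j) (i : Fin n)
    (s : List (List M) × B) (sD : List (List M) × ↥D) (hs : AuxInv D N j i s sD) :
    AuxInv D N j (i + 1) (bracketingStep κ ι P m s i)
      (bracketingStep κD (ι.comp D.val) P m sD i) := by
  obtain ⟨st, b⟩ := s
  obtain ⟨st', bD⟩ := sD
  obtain ⟨h1, h2, h3⟩ := hs
  simp only at h1 h2 h3
  subst h1 h2
  set st₁ : List (List M) := if IsBlockMin P i then [] :: st' else st' with hst₁
  have hst₂ : ∀ ts rest, st₁ = ts :: rest → ∀ l ∈ (m i :: ts) :: rest,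
      (∀ x ∈ l, x ∈ N) ∧ l.length ≤ i.val + 1 ∧ (j.val < i.val + 1 → l.length < i.val + 1) := by
    intro ts rest hts l hl
    by_cases hi : IsBlockMin P i
    · rw [if_pos hi] at hst₁
      rw [hst₁] at hts
      obtain ⟨rfl, rfl⟩ := List.cons.inj hts
      rcases List.mem_cons.1 hl with rfl | hl
      · refine ⟨by simpa using hm i, by simp, fun h => ?_⟩
        simp
        omega
      · obtain ⟨ha, hb, hc⟩ := h3 l hl
        exact ⟨ha, by omega, by omega⟩
    · rw [if_neg hi] at hst₁
      have hne : j.val ≠ i.val := fun h => hi (by rwa [← Fin.ext h])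
      rw [hst₁] at hts
      subst hts
      rcases List.mem_cons.1 hl with rfl | hl
      · obtain ⟨ha, hb, hc⟩ := h3 ts (by simp)
        refine ⟨?_, by simpa using hb, fun h => ?_⟩
        · intro x hx
          rcases List.mem_cons.1 hx with rfl | hx
          · exact hm i
          · exact ha x hx
        · have := hc (by omega)
          simpa using this
      · obtain ⟨ha, hb, hc⟩ := h3 l (List.mem_cons_of_mem _ hl)
        exact ⟨ha, by omega, by omega⟩
  unfold bracketingStep
  simp only [← hst₁]
  clear_value st₁
  rcases st₁ with _ | ⟨ts, rest⟩
  · by_cases hM : IsBlockMax P i <;> simp [hM, AuxInv]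
  · have h := hst₂ ts rest rfl
    by_cases hM : IsBlockMax P i
    · simp only [if_pos hM]
      obtain ⟨ha, hb, hc⟩ := h (m i :: ts) (by simp)
      have hκ : (κD (m i :: ts).reverse : B) = κ (m i :: ts).reverse := by
        apply H
        · simp
        · rw [List.length_reverse]
          have := i.2
          have := j.2
          omega
        · intro x hx
          exact ha x (List.mem_reverse.1 hx)
      rcases rest with _ | ⟨us, rest⟩
      · simp only [AuxInv]
        refine ⟨trivial, ?_, by simp⟩
        rw [← hκ]
        simp
      · simp only [AuxInv]
        refine ⟨?_, trivial, ?_⟩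
        · rw [← hκ]
          cases us <;> simp [closeArg]
        · intro l hl
          rcases List.mem_cons.1 hl with rfl | hl
          · obtain ⟨ha, hb, hc⟩ := h us (by simp)
            cases us with
            | nil => simpa [closeArg] using hc
            | cons u us =>
              refine ⟨?_, by simpa [closeArg] using hb, by simpa [closeArg] using hc⟩
              intro x hx
              rcases List.mem_cons.1 hx with rfl | hx
              · refine N.mul_mem (ha u (by simp)) ?_
                rw [← hκ]
                exact hDN _ (Subtype.property _)
              · exact ha x (by simp [hx])
          · exact h l (by simp [hl])
    · simp only [if_neg hM, AuxInv]
      exact ⟨trivial, trivial, h⟩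

theorem aux_bracketing_eq {B M : Type*} [Ring B] [Algebra ℂ B] [Ring M] [Algebra ℂ M]
    (ι : B →ₐ[ℂ] M) (D : Subalgebra ℂ B) (N : Subalgebra ℂ M) (hDN : ∀ d ∈ D, ι d ∈ N)
    (κ : List M → B) (κD : List M → ↥D) {n : ℕ}
    (H : ∀ l : List M, l ≠ [] → l.length < n → (∀ x ∈ l, x ∈ N) → (κD l : B) = κ l)
    (P : Finset (Finset (Fin n))) (m : Fin n → M) (hm : ∀ i, m i ∈ N)
    (j : Fin n) (hj0 : 0 < j.val) (hj : IsBlockMin P j) :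
    ((bracketing κD (ι.comp D.val) P m : ↥D) : B) = bracketing κ ι P m := by
  have key : ∀ k, k ≤ n → AuxInv D N j k
      (((List.finRange n).take k).foldl (bracketingStep κ ι P m) ([], 1))
      (((List.finRange n).take k).foldl (bracketingStep κD (ι.comp D.val) P m) ([], 1)) := by
    intro k
    induction k with
    | zero => intro _; simp [AuxInv]
    | succ k ih =>
      intro hk
      rw [aux_take_succ (show k < n by omega), List.foldl_append, List.foldl_append]
      exact aux_step ι D N hDN κ κD H P m hm j hj0 hj ⟨k, by omega⟩ _ _ (ih (by omega))
  have := (key n le_rfl).2.1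
  rw [List.take_of_length_le (by simp)] at this
  exact this

theorem aux_exists_min {n : ℕ} (hn : 0 < n) (P : Finset (Finset (Fin n))) (hP : IsPartition P)
    (hne : P ≠ {Finset.univ}) : ∃ j : Fin n, 0 < j.val ∧ IsBlockMin P j := by
  obtain ⟨t, ht, h0⟩ : ∃ t ∈ P, (⟨0, hn⟩ : Fin n) ∉ t := by
    by_contra! hcon
    apply hne
    obtain ⟨t0, ⟨ht0, h00⟩, huniq⟩ := hP.2 ⟨0, hn⟩
    have hall : ∀ t ∈ P, t = t0 := fun t ht => huniq t ⟨ht, hcon t ht⟩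
    have hu : t0 = Finset.univ := by
      ext i
      simp only [Finset.mem_univ, iff_true]
      obtain ⟨t, ⟨ht, hi⟩, _⟩ := hP.2 i
      exact hall t ht ▸ hi
    ext t
    rw [Finset.mem_singleton]
    constructor
    · intro h
      rw [hall t h, hu]
    · rintro rfl
      rwa [← hu]
  have hmem := t.min'_mem (hP.1 t ht)
  refine ⟨t.min' (hP.1 t ht), ?_, ?_⟩
  · rw [Nat.pos_iff_ne_zero]
    intro h
    apply h0
    have : (⟨0, hn⟩ : Fin n) = t.min' (hP.1 t ht) := Fin.ext h.symm
    rwa [this]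
  · intro u hu hmu k hk
    have : u = t := (hP.2 _).unique ⟨hu, hmu⟩ ⟨ht, hmem⟩
    subst this
    exact Finset.min'_le _ _ hk

theorem aux_univ_mem {n : ℕ} (hn : 0 < n) : ({Finset.univ} : Finset (Finset (Fin n))) ∈ NC n := by
  unfold NC
  rw [Finset.mem_filter]
  refine ⟨Finset.mem_univ _, ⟨?_, ?_⟩, ?_⟩
  · intro t ht
    rw [Finset.mem_singleton] at ht
    subst ht
    exact ⟨⟨0, hn⟩, Finset.mem_univ _⟩
  · intro i
    exact ⟨Finset.univ, by simp, fun t ht => by simpa using ht.1⟩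
  · intro a b c d _ _ _ t ht u hu _ _ _ _
    rw [Finset.mem_singleton] at ht hu
    rw [ht, hu]

/-- Let `(M, E : M → B)` be a `B`-probability space (with `ι : B → M` the
inclusion of `B` as a unital subalgebra), `D ⊆ B` a unital subalgebra and `F : B → D` a
conditional expectation, so that `(M, F∘E)` is a `D`-probability space (`ED` is `F∘E`
viewed as a map into `D`).  Let `κ = {⋯}_E` be the `B`-valued and `κD = {⋯}_{F∘E}` the
`D`-valued cumulant map, and let `N ⊆ M` be a subalgebra containing `D`.  If `{⋯}_E`
restricted to tuples from `N` is valued in `D`, then `{m₁, …, m_p}_{F∘E} = {m₁, …, m_p}_E`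
for all `p ≥ 1` and all `m₁, …, m_p ∈ N`. -/
theorem cumulant_map_restricts_on_subalgebra
    {B M : Type*} [Ring B] [Algebra ℂ B] [Ring M] [Algebra ℂ M]
    (ι : B →ₐ[ℂ] M) (hι : Function.Injective ι)
    (E : M →ₗ[ℂ] B) (hE : IsCondExp ι E)
    (D : Subalgebra ℂ B)
    (F : B →ₗ[ℂ] B) (hFD : ∀ b, F b ∈ D) (hFid : ∀ d ∈ D, F d = d)
    (hFbimod : ∀ d ∈ D, ∀ d' ∈ D, ∀ b : B, F (d * b * d') = d * F b * d')
    (ED : M →ₗ[ℂ] ↥D) (hED : ∀ m : M, (ED m : B) = F (E m))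
    (κ : MultiplicativeMap ι) (hκ : IsCumulantMap ι E κ)
    (κD : MultiplicativeMap (ι.comp D.val)) (hκD : IsCumulantMap (ι.comp D.val) ED κD)
    (N : Subalgebra ℂ M) (hDN : ∀ d ∈ D, ι d ∈ N)
    (hrestr : ∀ l : List M, l ≠ [] → (∀ x ∈ l, x ∈ N) → κ.toFun l ∈ D) :
    ∀ l : List M, l ≠ [] → (∀ x ∈ l, x ∈ N) → ((κD.toFun l : ↥D) : B) = κ.toFun l := by
  suffices h : ∀ n : ℕ, ∀ l : List M, l.length = n → l ≠ [] → (∀ x ∈ l, x ∈ N) →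
      ((κD.toFun l : ↥D) : B) = κ.toFun l from fun l => h _ l rfl
  intro n
  induction n using Nat.strong_induction_on with
  | _ n ih =>
    intro l hl hne hlN
    subst hl
    have hn : 0 < l.length := List.length_pos_iff.2 hne
    have hm : ∀ i, l.get i ∈ N := fun i => hlN _ (List.get_mem l i)
    have h1 := hκ _ l.get hn
    have h2 := congrArg (fun d : ↥D => (d : B)) (hκD _ l.get hn)
    rw [hED, h1, ← Finset.add_sum_erase _ _ (aux_univ_mem hn),
      ← Finset.add_sum_erase _ _ (aux_univ_mem hn), aux_bracketing_univ _ _ hn,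
      aux_bracketing_univ _ _ hn] at h2
    have hlist : (List.finRange l.length).map l.get = l := by simp
    rw [hlist] at h2
    have hsum : ((∑ P ∈ (NC l.length).erase {Finset.univ},
        bracketing κD.toFun (ι.comp D.val) P l.get : ↥D) : B)
        = ∑ P ∈ (NC l.length).erase {Finset.univ}, bracketing κ.toFun ι P l.get := by
      rw [AddSubmonoidClass.coe_finset_sum]
      refine Finset.sum_congr rfl fun P hP => ?_
      rw [Finset.mem_erase] at hP
      obtain ⟨hPne, hPm⟩ := hP
      unfold NC at hPm
      rw [Finset.mem_filter] at hPm
      obtain ⟨j, hj0, hj⟩ := aux_exists_min hn P hPm.2.1 hPne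
      exact aux_bracketing_eq ι D N hDN κ.toFun κD.toFun
        (fun l' hl' hlen hN' => ih _ hlen l' rfl hl' hN') P l.get hm j hj0 hj
    rw [map_add, hFid _ (hrestr l hne hlN), ← hsum, hFid _ (Subtype.property _),
      D.coe_add] at h2
    exact (add_right_cancel h2).symm
end
end
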